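/- arXiv:1912.02729 — 3 statements merged into one kernel-verified Lean document; each statement's English description precedes it below -/
import Mathlib

section
/- Fix α > 0 and Γ > 0, and for each d let m_d be a sequence of positive integers with m_d/d → α. If the columns of X are i.i.d. N(0, I_d), then R_{m_d}(F_linear) → Γ/√α as d → ∞. -/
/-!
By Cauchy–Schwarz, the supremum over the sphere `‖w‖ = Γ√d` equals `(Γ/m) ‖∑ ε_μ X_μ‖`
(`iSup_linClass`), so after exchanging the two integrals it suffices to estimate the expected norm
for a fixed sign vector `ε`. The coordinates of `∑ ε_μ X_μ` are then independent with law `N(0, m)`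
(`map_signedSum`, `indepFun_signedSum`), so `t = ‖∑ ε_μ X_μ‖² / (md)` has mean `1` and variance
`K / d`, where `K` is the variance of the square of a standard Gaussian. Integrating
`1 + (t-1)/2 - (t-1)²/2 ≤ √t ≤ 1 + (t-1)/2` yields
`√(md) (1 - K/(2d)) ≤ E‖∑ ε_μ X_μ‖ ≤ √(md)` (`integral_norm_bounds`). Hence the Rademacher
complexity lies between `Γ √(d/m) (1 - K/(2d))` and `Γ √(d/m)`, and the limit follows by squeezing.
-/

open MeasureTheory ProbabilityTheory Filter Finset

/-- The Rademacher (uniform ±1) distribution on `ℝ`. -/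
noncomputable def radMeasure : Measure ℝ :=
  ((PMF.bernoulli 2⁻¹ (by norm_num)).map (fun b => if b then (1 : ℝ) else -1)).toMeasure

instance : IsProbabilityMeasure radMeasure :=
  PMF.toMeasure.isProbabilityMeasure _

/-- The standard Gaussian measure `N(0, I_d)` on `Fin d → ℝ`. -/
noncomputable def stdGaussian (d : ℕ) : Measure (Fin d → ℝ) :=
  Measure.pi fun _ => gaussianReal 0 1

/-- Euclidean norm of a vector in `Fin d → ℝ`. -/
noncomputable def enorm' {d : ℕ} (v : Fin d → ℝ) : ℝ := Real.sqrt (∑ i, v i ^ 2)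

/-- The linear hypothesis class
`F_linear = { x ↦ (1/√d) wᵀx : w ∈ ℝ^d, ‖w‖₂ = Γ√d }`. -/
noncomputable def linClass (d : ℕ) (Γ : ℝ) : Set ((Fin d → ℝ) → ℝ) :=
  {f | ∃ w : Fin d → ℝ, enorm' w = Γ * Real.sqrt d ∧
    f = fun x => (Real.sqrt d)⁻¹ * ∑ i, w i * x i}

/-- Empirical Rademacher complexity of a class `F` at the sample `X`. -/
noncomputable def empRad {d m : ℕ} (F : Set ((Fin d → ℝ) → ℝ))
    (X : Fin m → Fin d → ℝ) : ℝ :=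
  ∫ ε : Fin m → ℝ, (⨆ f : F, (m : ℝ)⁻¹ * ∑ μ, ε μ * f.1 (X μ))
    ∂(Measure.pi fun _ => radMeasure)

/-- Population Rademacher complexity of a class `F`, with the sample drawn from `μX`. -/
noncomputable def popRad {d m : ℕ} (F : Set ((Fin d → ℝ) → ℝ))
    (μX : Measure (Fin m → Fin d → ℝ)) : ℝ :=
  ∫ X, empRad F X ∂μX

instance instProbStdGaussian (d : ℕ) : IsProbabilityMeasure (stdGaussian d) := by
  unfold _root_.stdGaussian; infer_instance

lemma ae_radMeasure : ∀ᵐ e ∂radMeasure, e ^ 2 = 1 := by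
  unfold radMeasure
  rw [← PMF.toMeasure_map _ _ (measurable_of_finite _),
    ae_map_iff (measurable_of_finite _).aemeasurable
      (measurableSet_eq_fun (by fun_prop) (by fun_prop))]
  refine ae_of_all _ fun b => ?_
  cases b <;> simp

lemma ae_pi_radMeasure (m : ℕ) :
    ∀ᵐ ε ∂(Measure.pi fun _ : Fin m => radMeasure), ∀ μ, ε μ ^ 2 = 1 := by
  rw [ae_all_iff]
  exact fun μ => (Measure.quasiMeasurePreserving_eval (fun _ : Fin m => radMeasure) μ).ae
    ae_radMeasure

/-- By Cauchy–Schwarz, with equality when `w` is parallel to `∑ ε_μ X_μ`, the supremum over the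
sphere is attained and equals a rescaled Euclidean norm. -/
lemma iSup_linClass {d m : ℕ} (hd : 0 < d) {Γ : ℝ} (hΓ : 0 < Γ) (X : Fin m → Fin d → ℝ)
    (ε : Fin m → ℝ) :
    (⨆ f : linClass d Γ, (m : ℝ)⁻¹ * ∑ μ, ε μ * f.1 (X μ)) =
      Γ / m * enorm' (fun i => ∑ μ, ε μ * X μ i) := by
  set v : Fin d → ℝ := fun i => ∑ μ, ε μ * X μ i with hv
  have hsd : 0 < Real.sqrt d := Real.sqrt_pos.2 (by exact_mod_cast hd)
  have key : ∀ w : Fin d → ℝ, (m : ℝ)⁻¹ * ∑ μ, ε μ * ((Real.sqrt d)⁻¹ * ∑ i, w i * X μ i) =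
      (m : ℝ)⁻¹ * ((Real.sqrt d)⁻¹ * ∑ i, w i * v i) := by
    intro w
    congr 1
    simp only [hv, Finset.mul_sum]
    rw [Finset.sum_comm]
    refine Finset.sum_congr rfl fun i _ => Finset.sum_congr rfl fun μ _ => ?_
    ring
  -- a unit vector parallel to `v`; any coordinate vector will do when `v = 0`
  obtain ⟨u, hu1, hu2⟩ : ∃ u : Fin d → ℝ, ∑ i, u i ^ 2 = 1 ∧ ∑ i, u i * v i = enorm' v := by
    by_cases h0 : ∑ i, v i ^ 2 = 0
    · have hz : ∀ i, v i = 0 := fun i => by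
        have := (Finset.sum_eq_zero_iff_of_nonneg (fun i _ => sq_nonneg (v i))).1 h0 i
          (Finset.mem_univ i)
        exact pow_eq_zero_iff two_ne_zero |>.1 this
      refine ⟨Pi.single ⟨0, hd⟩ 1, ?_, ?_⟩
      · simp [Pi.single_apply]
      · simp [enorm', hz]
    · have hpos : 0 < ∑ i, v i ^ 2 :=
        lt_of_le_of_ne (Finset.sum_nonneg fun i _ => sq_nonneg (v i)) (Ne.symm h0)
      have hs : enorm' v ^ 2 = ∑ i, v i ^ 2 := Real.sq_sqrt hpos.le
      have hn : 0 < enorm' v := Real.sqrt_pos.2 hpos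
      refine ⟨fun i => (enorm' v)⁻¹ * v i, ?_, ?_⟩
      · simp only [mul_pow, ← Finset.mul_sum, ← hs]
        field_simp
      · simp only [mul_assoc, ← Finset.mul_sum, ← pow_two, ← hs]
        field_simp
  have hw : enorm' (fun i => Γ * Real.sqrt d * u i) = Γ * Real.sqrt d := by
    simp only [enorm', mul_pow, ← Finset.mul_sum, hu1]
    rw [← mul_pow, mul_one, Real.sqrt_sq (by positivity)]
  have : Nonempty (linClass d Γ) := ⟨⟨_, _, hw, rfl⟩⟩
  refine IsLUB.ciSup_eq (IsGreatest.isLUB ⟨⟨⟨_, _, hw, rfl⟩, ?_⟩, ?_⟩)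
  · simp only [key]
    simp only [mul_assoc, ← Finset.mul_sum, hu2]
    field_simp
  · rintro _ ⟨⟨_, w, hw', rfl⟩, rfl⟩
    simp only [key]
    have hcs : ∑ i, w i * v i ≤ enorm' w * enorm' v :=
      Real.sum_mul_le_sqrt_mul_sqrt _ _ _
    rw [hw'] at hcs
    calc (m : ℝ)⁻¹ * ((Real.sqrt d)⁻¹ * ∑ i, w i * v i)
        ≤ (m : ℝ)⁻¹ * ((Real.sqrt d)⁻¹ * (Γ * Real.sqrt d * enorm' v)) := by gcongr
      _ = _ := by field_simp

lemma iIndepFun_entries (m d : ℕ) :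
    iIndepFun (fun (p : Fin m × Fin d) (X : Fin m → Fin d → ℝ) => X p.1 p.2)
      (Measure.pi fun _ : Fin m => stdGaussian d) := by
  have := iIndepFun_uncurry_infinitePi' (X := fun (_ : Fin m) (_ : Fin d) (x : ℝ) => x)
    (fun _ _ => gaussianReal 0 1) (fun _ _ => measurable_id)
  simp only [Measure.infinitePi_eq_pi] at this
  exact this

lemma map_entry (m d : ℕ) (μ : Fin m) (i : Fin d) :
    (Measure.pi fun _ : Fin m => stdGaussian d).map (fun X => X μ i) = gaussianReal 0 1 := by
  have h1 := measurePreserving_eval (fun _ : Fin m => stdGaussian d) μ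
  have h2 := measurePreserving_eval (fun _ : Fin d => gaussianReal 0 1) i
  exact (h2.comp h1).map_eq

/-- A sign-weighted column sum of i.i.d. standard Gaussians has law `N(0, m)`. -/
lemma map_signedSum {m : ℕ} (d : ℕ) (ε : Fin m → ℝ) (hε : ∀ μ, ε μ ^ 2 = 1) (i : Fin d) :
    (Measure.pi fun _ : Fin m => stdGaussian d).map (fun X => ∑ μ, ε μ * X μ i) =
      gaussianReal 0 m := by
  set P := Measure.pi fun _ : Fin m => stdGaussian d
  let Y : Fin m → (Fin m → Fin d → ℝ) → ℝ := fun μ X => ε μ * X μ i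
  have hY : ∀ μ, Measurable (Y μ) := fun μ => by fun_prop
  have hind : iIndepFun Y P :=
    ((iIndepFun_entries m d).precomp (g := fun μ : Fin m => (μ, i))
      (fun a b h => (Prod.mk.inj h).1)).comp (fun μ x => ε μ * x) (fun μ => by fun_prop)
  have hlaw : ∀ μ, P.map (Y μ) = gaussianReal 0 1 := fun μ => by
    have : Y μ = (fun x => ε μ * x) ∘ (fun X => X μ i) := rfl
    rw [this, ← Measure.map_map (by fun_prop) (by fun_prop), map_entry,
      gaussianReal_map_const_mul]
    congr 1
    · simp
    · ext; simp [hε μ]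
  have main : ∀ s : Finset (Fin m), P.map (∑ μ ∈ s, Y μ) = gaussianReal 0 s.card := by
    intro s
    induction s using Finset.induction_on with
    | empty =>
      simp only [Finset.sum_empty, Finset.card_empty, Nat.cast_zero, gaussianReal_zero_var]
      change P.map (fun _ => (0 : ℝ)) = _
      rw [Measure.map_const]; simp
    | insert a s ha ih =>
      rw [Finset.sum_insert ha, add_comm, Finset.card_insert_of_notMem ha,
        gaussianReal_add_gaussianReal_of_indepFun
          (hind.indepFun_finsetSum_of_notMem hY ha) ih (hlaw a)]
      simp
  have := main Finset.univ
  rw [Finset.card_univ, Fintype.card_fin] at this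
  rw [← this]
  congr 1
  ext X
  simp [Y]

/-- Different coordinates of the signed sum depend on disjoint blocks of independent entries. -/
lemma indepFun_signedSum {m d : ℕ} (ε : Fin m → ℝ) {i j : Fin d} (hij : i ≠ j) :
    IndepFun (fun X : Fin m → Fin d → ℝ => ∑ μ, ε μ * X μ i) (fun X => ∑ μ, ε μ * X μ j)
      (Measure.pi fun _ : Fin m => stdGaussian d) := by
  have hdisj : Disjoint ((Finset.univ : Finset (Fin m)) ×ˢ {i}) (Finset.univ ×ˢ {j}) := by
    rw [Finset.disjoint_left]
    rintro ⟨a, b⟩ h1 h2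
    simp only [Finset.mem_product, Finset.mem_singleton] at h1 h2
    exact hij (h1.2.symm.trans h2.2)
  have h := (iIndepFun_entries m d).indepFun_finset _ _ hdisj (fun p => by fun_prop)
  exact h.comp
    (φ := fun x => ∑ μ, ε μ * x ⟨(μ, i), Finset.mem_product.2 (by simp)⟩)
    (ψ := fun x => ∑ μ, ε μ * x ⟨(μ, j), Finset.mem_product.2 (by simp)⟩)
    (Finset.measurable_fun_sum _ fun μ _ => (measurable_pi_apply _).const_mul _)
    (Finset.measurable_fun_sum _ fun μ _ => (measurable_pi_apply _).const_mul _)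

/-- The variance of the square of a standard Gaussian. -/
noncomputable def varSq : ℝ := Var[fun x : ℝ => x ^ 2; gaussianReal 0 1]

lemma memLp_sq_gaussianReal (v : NNReal) : MemLp (fun x : ℝ => x ^ 2) 2 (gaussianReal 0 v) := by
  have h : MemLp (id : ℝ → ℝ) 4 (gaussianReal 0 v) := memLp_id_gaussianReal' 4 (by simp)
  have h2 := h.mul (r := 2) (hpqr := ⟨by
    rw [← ENNReal.toReal_eq_toReal_iff' (by simp) (by simp),
      ENNReal.toReal_add (by simp) (by simp)]
    simp
    norm_num⟩) h
  have h3 : (fun x : ℝ => x ^ 2) = id * id := by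
    ext x; simp [pow_two]
  rw [h3]
  exact h2

lemma integral_sq_gaussianReal (v : NNReal) : ∫ x, x ^ 2 ∂gaussianReal 0 v = v := by
  have h := variance_of_integral_eq_zero (X := fun x : ℝ => x) (μ := gaussianReal 0 v)
    (by fun_prop) integral_id_gaussianReal
  rw [variance_fun_id_gaussianReal] at h
  exact h.symm

lemma variance_sq_gaussianReal (n : ℕ) :
    Var[fun x : ℝ => x ^ 2; gaussianReal 0 n] = (n : ℝ) ^ 2 * varSq := by
  have h : gaussianReal 0 n = (gaussianReal 0 1).map (fun x => Real.sqrt n * x) := by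
    rw [gaussianReal_map_const_mul]
    congr 1
    · simp
    · ext; simp
  rw [h, variance_map (by fun_prop) (by fun_prop), varSq, ← variance_const_mul]
  congr 1
  ext x
  simp [mul_pow]

lemma sqrt_le_aux {t : ℝ} (ht : 0 ≤ t) : Real.sqrt t ≤ 1 + (t - 1) / 2 := by
  nlinarith [Real.sq_sqrt ht, sq_nonneg (Real.sqrt t - 1)]

lemma aux_le_sqrt {t : ℝ} (ht : 0 ≤ t) :
    1 + (t - 1) / 2 - (t - 1) ^ 2 / 2 ≤ Real.sqrt t := by
  obtain ⟨s, hs, rfl⟩ : ∃ s : ℝ, 0 ≤ s ∧ t = s ^ 2 :=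
    ⟨Real.sqrt t, Real.sqrt_nonneg t, (Real.sq_sqrt ht).symm⟩
  rw [Real.sqrt_sq hs]
  have : s - (1 + (s ^ 2 - 1) / 2 - (s ^ 2 - 1) ^ 2 / 2) = (s - 1) ^ 2 * (s * (s + 2)) / 2 := by
    ring
  have h2 : 0 ≤ (s - 1) ^ 2 * (s * (s + 2)) / 2 := by positivity
  linarith

/-- For fixed signs, the expected norm of `∑ ε_μ X_μ` is `√(md)` up to a factor `1 - O(1/d)`. The
normalized squared norm `t` has mean `1` and variance `varSq / d`, so integrating the two-sided
quadratic bounds on `√t` around `t = 1` gives both estimates. -/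
lemma integral_norm_bounds {m d : ℕ} (hm : 0 < m) (hd : 0 < d) (ε : Fin m → ℝ)
    (hε : ∀ μ, ε μ ^ 2 = 1) :
    Real.sqrt (m * d) * (1 - varSq / (2 * d)) ≤
        ∫ X, enorm' (fun i => ∑ μ, ε μ * X μ i) ∂(Measure.pi fun _ : Fin m => stdGaussian d) ∧
      ∫ X, enorm' (fun i => ∑ μ, ε μ * X μ i) ∂(Measure.pi fun _ : Fin m => stdGaussian d) ≤
        Real.sqrt (m * d) := by
  set P := Measure.pi fun _ : Fin m => stdGaussian d
  have hm' : (0 : ℝ) < m := by exact_mod_cast hm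
  have hd' : (0 : ℝ) < d := by exact_mod_cast hd
  let S : Fin d → (Fin m → Fin d → ℝ) → ℝ := fun i X => ∑ μ, ε μ * X μ i
  have hS : ∀ i, Measurable (S i) := fun i => by fun_prop
  let Q : Fin d → (Fin m → Fin d → ℝ) → ℝ := fun i X => S i X ^ 2
  have hlaw : ∀ i, P.map (S i) = gaussianReal 0 m := map_signedSum d ε hε
  have hQ2 : ∀ i, MemLp (Q i) 2 P := fun i => by
    have := memLp_sq_gaussianReal m
    rw [← hlaw i] at this
    exact this.comp_of_map (hS i).aemeasurable
  have hQint : ∀ i, ∫ X, Q i X ∂P = m := fun i => by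
    have := integral_sq_gaussianReal m
    rw [← hlaw i, integral_map (hS i).aemeasurable (by fun_prop)] at this
    simpa using this
  have hQvar : ∀ i, Var[Q i; P] = (m : ℝ) ^ 2 * varSq := fun i => by
    rw [← variance_sq_gaussianReal, ← hlaw i, variance_map (by fun_prop) (hS i).aemeasurable]
    rfl
  have hvar : Var[∑ i, Q i; P] = d * ((m : ℝ) ^ 2 * varSq) := by
    rw [IndepFun.variance_sum (fun i _ => hQ2 i)]
    · simp [hQvar]
    · intro i _ j _ hij
      exact (indepFun_signedSum ε hij).comp (φ := fun x => x ^ 2) (ψ := fun x => x ^ 2)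
        (by fun_prop) (by fun_prop)
  let t : (Fin m → Fin d → ℝ) → ℝ := fun X => ((m : ℝ) * d)⁻¹ * (∑ i, Q i) X
  have ht0 : ∀ X, 0 ≤ t X := fun X => by
    have : 0 ≤ (∑ i, Q i) X := by
      rw [Finset.sum_apply]; exact Finset.sum_nonneg fun i _ => sq_nonneg _
    positivity
  have hsum2 : MemLp (∑ i, Q i) 2 P := memLp_finsetSum' _ fun i _ => hQ2 i
  have ht2 : MemLp t 2 P := hsum2.const_mul _
  have htint : Integrable t P := ht2.integrable (by norm_num)
  have hmean : ∫ X, t X ∂P = 1 := by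
    simp only [t, integral_const_mul, Finset.sum_apply]
    rw [integral_finsetSum _ fun i _ => (hQ2 i).integrable (by norm_num)]
    simp only [hQint]
    simp
    field_simp
  have hvart : ∫ X, (t X - 1) ^ 2 ∂P = varSq / d := by
    have h := variance_eq_integral ht2.aemeasurable
    rw [hmean] at h
    rw [← h, variance_const_mul, hvar]
    field_simp
  have hdev : Integrable (fun X => (t X - 1) ^ 2) P := by
    have := (ht2.sub (memLp_const 1)).integrable_sq
    exact this
  have hnorm : ∀ X, enorm' (fun i => ∑ μ, ε μ * X μ i) =
      Real.sqrt (m * d) * Real.sqrt (t X) := fun X => by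
    rw [← Real.sqrt_mul (by positivity)]
    simp only [enorm', t, Finset.sum_apply, Q, S]
    congr 1
    field_simp
  simp only [hnorm, integral_const_mul]
  have hup : Integrable (fun X => 1 + (t X - 1) / 2) P := by fun_prop
  have hupint : ∫ X, (1 + (t X - 1) / 2) ∂P = 1 := by
    rw [integral_add (by fun_prop) (by fun_prop), integral_div, integral_sub htint (by fun_prop),
      hmean]
    simp
  have htm : AEStronglyMeasurable (fun X => Real.sqrt (t X)) P :=
    Real.continuous_sqrt.comp_aestronglyMeasurable htint.1
  have hsqrt : Integrable (fun X => Real.sqrt (t X)) P := by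
    refine hup.mono' htm (ae_of_all _ fun X => ?_)
    rw [Real.norm_of_nonneg (Real.sqrt_nonneg _)]
    exact sqrt_le_aux (ht0 X)
  constructor
  · gcongr
    have h := integral_mono (hup.sub (hdev.div_const 2)) hsqrt fun X => aux_le_sqrt (ht0 X)
    have h' : ∫ X, (1 + (t X - 1) / 2 - (t X - 1) ^ 2 / 2) ∂P =
        1 - varSq / (2 * d) := by
      rw [integral_sub hup (hdev.div_const 2), hupint, integral_div, hvart]
      field_simp
    rw [← h']
    exact h
  · have h := integral_mono hsqrt hup fun X => sqrt_le_aux (ht0 X)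
    rw [hupint] at h
    exact mul_le_of_le_one_right (Real.sqrt_nonneg _) h

lemma enorm'_le_sum_abs {d : ℕ} (v : Fin d → ℝ) : enorm' v ≤ ∑ i, |v i| := by
  apply Real.sqrt_le_iff.2 ⟨Finset.sum_nonneg fun i _ => abs_nonneg _, ?_⟩
  simp only [← sq_abs (v _)]
  exact Finset.sum_sq_le_sq_sum_of_nonneg fun i _ => abs_nonneg _

lemma integrable_norm_prod (m d : ℕ) :
    Integrable (fun p : (Fin m → Fin d → ℝ) × (Fin m → ℝ) =>
        enorm' (fun i => ∑ μ, p.2 μ * p.1 μ i))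
      ((Measure.pi fun _ : Fin m => stdGaussian d).prod
        (Measure.pi fun _ : Fin m => radMeasure)) := by
  have hX : ∀ (μ : Fin m) (i : Fin d),
      Integrable (fun X : Fin m → Fin d → ℝ => X μ i)
        (Measure.pi fun _ : Fin m => stdGaussian d) := fun μ i => by
    have h : Integrable (id : ℝ → ℝ) (gaussianReal 0 1) :=
      (memLp_id_gaussianReal' 1 (by simp)).integrable le_rfl
    rw [← map_entry m d μ i] at h
    exact h.comp_measurable (by fun_prop)
  have hε : ∀ μ : Fin m, Integrable (fun ε : Fin m → ℝ => ε μ)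
      (Measure.pi fun _ : Fin m => radMeasure) := fun μ => by
    refine Integrable.of_bound (C := 1) (measurable_pi_apply μ).aestronglyMeasurable ?_
    filter_upwards [ae_pi_radMeasure m] with ε h
    rw [Real.norm_eq_abs]
    exact (sq_le_one_iff_abs_le_one _).1 (h μ).le
  have hsum : Integrable (fun p : (Fin m → Fin d → ℝ) × (Fin m → ℝ) =>
      ∑ i, |∑ μ, p.2 μ * p.1 μ i|)
      ((Measure.pi fun _ : Fin m => stdGaussian d).prod
        (Measure.pi fun _ : Fin m => radMeasure)) := by
    refine integrable_finsetSum _ fun i _ => Integrable.abs ?_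
    refine integrable_finsetSum _ fun μ _ => ?_
    simpa only [mul_comm] using (hX μ i).mul_prod (hε μ)
  refine hsum.mono' ?_ (ae_of_all _ fun p => ?_)
  · unfold enorm'
    exact (Measurable.sqrt (by fun_prop)).aestronglyMeasurable
  · rw [enorm', Real.norm_of_nonneg (Real.sqrt_nonneg _)]
    exact enorm'_le_sum_abs _

lemma popRad_bounds {m d : ℕ} (hm : 0 < m) (hd : 0 < d) {Γ : ℝ} (hΓ : 0 < Γ) :
    Γ / m * (Real.sqrt (m * d) * (1 - varSq / (2 * d))) ≤
        popRad (linClass d Γ) (Measure.pi fun _ : Fin m => stdGaussian d) ∧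
      popRad (linClass d Γ) (Measure.pi fun _ : Fin m => stdGaussian d) ≤
        Γ / m * Real.sqrt (m * d) := by
  have hI := integrable_norm_prod m d
  have hpop : popRad (linClass d Γ) (Measure.pi fun _ : Fin m => stdGaussian d) =
      Γ / m * ∫ ε, ∫ X, enorm' (fun i => ∑ μ, ε μ * X μ i)
        ∂(Measure.pi fun _ : Fin m => stdGaussian d) ∂(Measure.pi fun _ : Fin m => radMeasure) := by
    simp only [popRad, empRad, iSup_linClass hd hΓ, integral_const_mul]
    rw [integral_integral_swap hI]
  rw [hpop]
  have hI2 := hI.integral_prod_right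
  constructor
  · gcongr
    have h := integral_mono_ae (integrable_const _) hI2
      ((ae_pi_radMeasure m).mono fun ε hε => (integral_norm_bounds hm hd ε hε).1)
    simpa using h
  · gcongr
    have h := integral_mono_ae hI2 (integrable_const _)
      ((ae_pi_radMeasure m).mono fun ε hε => (integral_norm_bounds hm hd ε hε).2)
    simpa using h

/-- If `m_d/d → α` and the sample columns are i.i.d. `N(0, I_d)`, then
`R_{m_d}(F_linear) → Γ/√α` as `d → ∞`. -/
theorem popRad_linClass_tendsto (α Γ : ℝ) (hα : 0 < α) (hΓ : 0 < Γ)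
    (m : ℕ → ℕ) (hm : ∀ d, 0 < m d)
    (hlim : Tendsto (fun d : ℕ => (m d : ℝ) / d) atTop (nhds α)) :
    Tendsto (fun d : ℕ =>
        popRad (linClass d Γ) (Measure.pi fun _ : Fin (m d) => stdGaussian d))
      atTop (nhds (Γ / Real.sqrt α)) := by
  have hU : Tendsto (fun d : ℕ => Γ / Real.sqrt ((m d : ℝ) / d)) atTop
      (nhds (Γ / Real.sqrt α)) :=
    tendsto_const_nhds.div hlim.sqrt (Real.sqrt_pos.2 hα).ne'
  have hK : Tendsto (fun d : ℕ => 1 - varSq / (2 * (d : ℝ))) atTop (nhds (1 - 0)) := by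
    refine tendsto_const_nhds.sub (Tendsto.div_atTop tendsto_const_nhds ?_)
    exact tendsto_natCast_atTop_atTop.const_mul_atTop two_pos
  have hL := hU.mul hK
  rw [sub_zero, mul_one] at hL
  have heq : ∀ d : ℕ, 0 < d →
      Γ / m d * Real.sqrt (m d * d) = Γ / Real.sqrt ((m d : ℝ) / d) := by
    intro d hd
    have h1 : 0 < Real.sqrt (m d) := Real.sqrt_pos.2 (by exact_mod_cast hm d)
    have h2 : 0 < Real.sqrt d := Real.sqrt_pos.2 (by exact_mod_cast hd)
    have h3 : (m d : ℝ) = Real.sqrt (m d) ^ 2 := (Real.sq_sqrt (by positivity)).symm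
    rw [Real.sqrt_mul (by positivity), Real.sqrt_div (by positivity)]
    nth_rewrite 1 [h3]
    field_simp
  refine tendsto_of_tendsto_of_tendsto_of_le_of_le' hL hU ?_ ?_
  · filter_upwards [eventually_gt_atTop 0] with d hd
    rw [← heq d hd, mul_assoc]
    exact (popRad_bounds (hm d) hd hΓ).1
  · filter_upwards [eventually_gt_atTop 0] with d hd
    rw [← heq d hd]
    exact (popRad_bounds (hm d) hd hΓ).2
end

section
/- (Theorem 2 of the paper.) There exist constants 0 < c ≤ C such that for every α ≥ 1, if for each d the sample columns x^(1),…,x^(m) are i.i.d. N(0, I_d) with m = ⌈αd⌉, then R_m(F_sign) ≤ C/√α for all d, and liminf_{d→∞} R_m(F_sign) ≥ c/√α; i.e. in the high-dimensional limit R_m(F_sign) = Θ(1/√α). -/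
/-!
**Upper bound.** For every fixed sample `X` the supremum over the sign class depends only on the
finite family `pats X` of subsets of the sample cut out by closed homogeneous halfspaces. A
shattered set is linearly independent (`card_le_of_shatters`), so the VC dimension is at most `d`,
and Sauer–Shelah bounds the number of patterns. Dudley's extraction argument turns this into a
packing bound: an `ε m`-separated family of patterns has log-cardinality at most
`2 d log (4 / ε) + ε / 2` (`log_card_sep_le`). Chaining over the scales `4⁻ʲ`, with Massart's finite
class lemma for each link, gives `22 √(d m)` for the supremum of the Rademacher process
(`cubeSup_pats_le`); a single application of Massart's lemma would lose a logarithm of `α`.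
Dividing by `m ≥ α d` gives `22 / √α`.

**Lower bound.** For each choice of signs `ε` the supremum is at least the value at the Hebb vector
`w = ∑ ε_ν x_ν`. Conditionally on `x_μ`, the quantity `ε_μ ⟪w, x_μ⟫` is `‖x_μ‖² + ‖x_μ‖ √n g` with
`n = m - 1` and `g` standard normal, so its mean sign is at least `kap * min (‖x_μ‖ / √n) 1`
(`hebb_inner`). Since `n ≤ α d`, averaging over `x_μ` gives at least `kap * truncMoment / √α`
(`hebb_term`, `popRad_ge`), for every `d ≥ 2`.

The population complexity is a Bochner integral, so bounding it from below needs integrability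
of `empRad`. This holds because `empRad` is a function of `pats X` alone and the
realizability of a given pattern is an `F_σ` condition on `X` (`measurableSet_mem_pats`).
-/

open MeasureTheory ProbabilityTheory Filter Finset

/-- The sign function with the convention `sgn 0 = 1`. -/
noncomputable def sgn (t : ℝ) : ℝ := if 0 ≤ t then 1 else -1

/-- The perceptron hypothesis class
`F_sign = { x ↦ sign((1/√d) wᵀx) : w ∈ ℝ^d }`. -/
noncomputable def signClass (d : ℕ) : Set ((Fin d → ℝ) → ℝ) :=
  {f | ∃ w : Fin d → ℝ, f = fun x => sgn ((Real.sqrt d)⁻¹ * ∑ i, w i * x i)}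

/-! ### Halfspace patterns and their shatter function -/

open scoped Classical in
/-- The patterns that homogeneous closed halfspaces cut out of the points `X 0, …, X (k-1)`. -/
noncomputable def pats {d k : ℕ} (X : Fin k → Fin d → ℝ) : Finset (Finset (Fin k)) :=
  Finset.univ.filter fun A => ∃ w : Fin d → ℝ, ∀ i, i ∈ A ↔ 0 ≤ ∑ j, w j * X i j

lemma mem_pats {d k : ℕ} {X : Fin k → Fin d → ℝ} {A : Finset (Fin k)} :
    A ∈ pats X ↔ ∃ w : Fin d → ℝ, ∀ i, i ∈ A ↔ 0 ≤ ∑ j, w j * X i j := by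
  simp [pats]

lemma pats_nonempty {d k : ℕ} (X : Fin k → Fin d → ℝ) : (pats X).Nonempty :=
  ⟨Finset.univ, mem_pats.2 ⟨0, by simp⟩⟩

/-- A shattered set of points is linearly independent: in a nontrivial relation `∑ aᵢ xᵢ = 0`
with some `aᵢ < 0`, a halfspace cutting out exactly the points with `aᵢ ≥ 0` gives
`∑ aᵢ ⟪w, xᵢ⟫ > 0`. -/
lemma card_le_of_shatters {d k : ℕ} (X : Fin k → Fin d → ℝ) (S : Finset (Fin k))
    (hS : (pats X).Shatters S) : S.card ≤ d := by
  have hli : LinearIndependent ℝ (fun i : S => X i) := by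
    rw [Fintype.linearIndependent_iff]
    have key : ∀ g : S → ℝ, ∑ i, g i • X i = 0 → ∀ i, 0 ≤ g i := by
      intro g hg i₀
      by_contra hneg
      push Not at hneg
      obtain ⟨u, hu, hSu⟩ := hS (t := S.filter fun i => ∃ h : i ∈ S, 0 ≤ g ⟨i, h⟩)
        (Finset.filter_subset _ _)
      obtain ⟨w, hw⟩ := mem_pats.1 hu
      have hiff : ∀ i : S, 0 ≤ g i ↔ 0 ≤ ∑ j, w j * X i j := by
        intro i
        rw [← hw i]
        have := congrArg (fun T => (i : Fin k) ∈ T) hSu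
        simp at this
        exact this.symm
      have hsum : ∑ i : S, g i * ∑ j, w j * X i j = 0 := by
        have : ∑ j, w j * (∑ i : S, g i • X i) j = 0 := by rw [hg]; simp
        rw [← this]
        simp_rw [Finset.sum_apply, Pi.smul_apply, smul_eq_mul, Finset.mul_sum]
        rw [Finset.sum_comm]
        exact Finset.sum_congr rfl fun _ _ => Finset.sum_congr rfl fun _ _ => by ring
      have hpos : 0 < ∑ i : S, g i * ∑ j, w j * X i j := by
        apply Finset.sum_pos'
        · intro i _
          by_cases h : 0 ≤ g i
          · exact mul_nonneg h ((hiff i).1 h)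
          · have h2 := not_le.1 fun h' => h ((hiff i).2 h')
            push Not at h
            exact (mul_pos_of_neg_of_neg h h2).le
        · refine ⟨i₀, Finset.mem_univ _, ?_⟩
          have h2 := not_le.1 fun h' => not_le.2 hneg ((hiff i₀).2 h')
          exact mul_pos_of_neg_of_neg hneg h2
      linarith
    intro g hg i
    refine le_antisymm ?_ (key g hg i)
    have := key (fun i => - g i) (by simpa using hg) i
    linarith
  simpa using hli.fintype_card_le_finrank

/-- Sauer–Shelah for halfspaces, in exponential form. -/
lemma card_pats_le {d k : ℕ} (X : Fin k → Fin d → ℝ) {t : ℝ} (ht : 0 < t) (ht1 : t ≤ 1) :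
    ((pats X).card : ℝ) ≤ (t⁻¹) ^ d * (1 + t) ^ k := by
  have hvc : (pats X).vcDim ≤ d :=
    Finset.sup_le fun S hS => card_le_of_shatters X S (Finset.mem_shatterer.1 hS)
  have h1 : (pats X).card ≤ ∑ i ∈ Finset.Iic (pats X).vcDim, (Fintype.card (Fin k)).choose i :=
    (Finset.card_le_card_shatterer _).trans Finset.card_shatterer_le_sum_vcDim
  have h2 : (pats X).card ≤ ∑ i ∈ Finset.Iic d, k.choose i := by
    refine h1.trans ?_
    rw [Fintype.card_fin]
    exact Finset.sum_le_sum_of_subset (Finset.Iic_subset_Iic.2 hvc)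
  have h3 : ((pats X).card : ℝ) ≤ ∑ i ∈ Finset.Iic d, (k.choose i : ℝ) := by exact_mod_cast h2
  refine h3.trans ?_
  have hpow : ∑ i ∈ Finset.range (k + 1), t ^ i * (k.choose i : ℝ) = (1 + t) ^ k := by
    rw [add_comm 1 t, add_pow]
    simp
  have h4 : ∑ i ∈ Finset.Iic d, t ^ i * (k.choose i : ℝ) ≤ (1 + t) ^ k := by
    rw [← hpow]
    have : ∑ i ∈ Finset.Iic d, t ^ i * (k.choose i : ℝ)
        = ∑ i ∈ (Finset.Iic d).filter (· ∈ Finset.range (k+1)), t ^ i * (k.choose i : ℝ) := by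
      rw [Finset.sum_filter_of_ne]
      intro i _ hi
      by_contra hc
      simp at hc
      exact hi (by rw [Nat.choose_eq_zero_of_lt (by omega)]; simp)
    rw [this]
    apply Finset.sum_le_sum_of_subset_of_nonneg
    · intro i hi; exact (Finset.mem_filter.1 hi).2
    · intros; positivity
  calc ∑ i ∈ Finset.Iic d, (k.choose i : ℝ)
      ≤ ∑ i ∈ Finset.Iic d, (t⁻¹) ^ d * (t ^ i * (k.choose i : ℝ)) := by
        apply Finset.sum_le_sum
        intro i hi
        have hid : i ≤ d := by simpa using hi
        rw [← mul_assoc]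
        refine le_mul_of_one_le_left (by positivity) ?_
        rw [inv_pow, inv_mul_eq_div, one_le_div (by positivity)]
        exact pow_le_pow_of_le_one ht.le ht1 hid
    _ = (t⁻¹) ^ d * ∑ i ∈ Finset.Iic d, t ^ i * (k.choose i : ℝ) := by rw [Finset.mul_sum]
    _ ≤ _ := by gcongr

/-! ### Packing numbers -/

/-- The family `T` is `r`-separated in Hamming distance. -/
def HamSep {m : ℕ} (r : ℝ) (T : Finset (Finset (Fin m))) : Prop :=
  ∀ A ∈ T, ∀ B ∈ T, A ≠ B → r < ((symmDiff A B).card : ℝ)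

/-- Dudley's extraction argument: about `2 log |T| / ε` random sample points already distinguish
all members of an `ε m`-separated family `T`, so the shatter function at that many points bounds
`|T|`. -/
lemma log_card_sep_le {d m : ℕ} (hm : 0 < m) (X : Fin m → Fin d → ℝ) {ε : ℝ} (hε : 0 < ε)
    (hε1 : ε ≤ 1) (T : Finset (Finset (Fin m))) (hT : T ⊆ pats X) (hne : T.Nonempty)
    (hsep : HamSep (ε * m) T) :
    Real.log T.card ≤ 2 * d * Real.log (4 / ε) + ε / 2 := by
  set N : ℝ := (T.card : ℝ) with hN
  have hN1 : 1 ≤ N := by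
    rw [hN]; exact_mod_cast hne.card_pos
  have hL : 0 ≤ Real.log N := Real.log_nonneg hN1
  set k : ℕ := ⌈2 * Real.log N / ε⌉₊ with hk
  have hk1 : 2 * Real.log N / ε ≤ k := Nat.le_ceil _
  have hk2 : (k : ℝ) ≤ 2 * Real.log N / ε + 1 := (Nat.ceil_lt_add_one (by positivity)).le
  have hmR : (0 : ℝ) < m := by exact_mod_cast hm
  have hdec : (1 - ε) ^ k ≤ (N ^ 2)⁻¹ := by
    calc (1 - ε) ^ k ≤ (Real.exp (-ε)) ^ k := by
          refine pow_le_pow_left₀ (by linarith) ?_ k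
          linarith [Real.add_one_le_exp (-ε)]
      _ = Real.exp (-(ε * k)) := by rw [← Real.exp_nat_mul]; ring_nf
      _ ≤ Real.exp (-(2 * Real.log N)) := by
          rw [div_le_iff₀ hε] at hk1
          exact Real.exp_le_exp.2 (by linarith)
      _ = (N ^ 2)⁻¹ := by
          rw [Real.exp_neg, two_mul, Real.exp_add, Real.exp_log (by linarith), sq]
  -- a sample `g` separating all members of `T`
  obtain ⟨g, hg⟩ : ∃ g : Fin k → Fin m, ∀ A ∈ T, ∀ B ∈ T, A ≠ B →
      ∃ i, g i ∈ symmDiff A B := by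
    by_contra hcon
    push Not at hcon
    have hcov : (Finset.univ : Finset (Fin k → Fin m)) ⊆
        T.offDiag.biUnion fun p => Fintype.piFinset fun _ => (symmDiff p.1 p.2)ᶜ := by
      intro g _
      obtain ⟨A, hA, B, hB, hAB, h⟩ := hcon g
      simp only [Finset.mem_biUnion, Finset.mem_offDiag, Fintype.mem_piFinset, Finset.mem_compl]
      exact ⟨(A, B), ⟨hA, hB, hAB⟩, h⟩
    have hcard := (Finset.card_le_card hcov).trans Finset.card_biUnion_le
    have hcardR : ((m : ℝ)) ^ k ≤ ∑ p ∈ T.offDiag,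
        (((Fintype.piFinset fun _ : Fin k => (symmDiff p.1 p.2)ᶜ).card : ℕ) : ℝ) := by
      have : Fintype.card (Fin k → Fin m) = m ^ k := by simp
      rw [Finset.card_univ, this] at hcard
      exact_mod_cast hcard
    have hterm : ∀ p ∈ T.offDiag,
        (((Fintype.piFinset fun _ : Fin k => (symmDiff p.1 p.2)ᶜ).card : ℕ) : ℝ)
          ≤ (m : ℝ) ^ k * (N ^ 2)⁻¹ := by
      intro p hp
      obtain ⟨hA, hB, hAB⟩ := Finset.mem_offDiag.1 hp
      have hs := hsep _ hA _ hB hAB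
      rw [Fintype.card_piFinset_const, Finset.card_compl, Fintype.card_fin]
      have hle : (symmDiff p.1 p.2).card ≤ m := by
        simpa using Finset.card_le_univ (symmDiff p.1 p.2)
      rw [Nat.cast_pow, Nat.cast_sub hle]
      calc ((m : ℝ) - (symmDiff p.1 p.2).card) ^ k ≤ ((m : ℝ) * (1 - ε)) ^ k := by
            gcongr
            · rw [sub_nonneg]; exact_mod_cast hle
            · linarith
        _ = (m : ℝ) ^ k * (1 - ε) ^ k := mul_pow _ _ _
        _ ≤ _ := by gcongr
    have h5 := hcardR.trans (Finset.sum_le_card_nsmul _ _ _ hterm)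
    rw [Finset.offDiag_card, nsmul_eq_mul, Nat.cast_sub (Nat.le_mul_self _)] at h5
    push_cast at h5
    rw [← hN] at h5
    have h6 : (0 : ℝ) < (m : ℝ) ^ k := by positivity
    have h7 : (N * N - N) * ((m : ℝ) ^ k * (N ^ 2)⁻¹) = (m : ℝ) ^ k * (1 - N⁻¹) := by
      field_simp
    rw [h7] at h5
    have h8 : 0 < N⁻¹ := by positivity
    nlinarith
  have hcardT : T.card ≤ (pats fun i => X (g i)).card := by
    apply Finset.card_le_card_of_injOn (fun A => Finset.univ.filter fun i => g i ∈ A)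
    · intro A hA
      obtain ⟨w, hw⟩ := mem_pats.1 (hT hA)
      exact mem_pats.2 ⟨w, fun i => by simp [hw]⟩
    · intro A hA B hB hAB
      by_contra hne
      obtain ⟨i, hi⟩ := hg A hA B hB hne
      have := congrArg (fun S => i ∈ S) hAB
      simp at this
      rw [Finset.mem_symmDiff] at hi
      tauto
  have hcardN : N ≤ ((ε / 4)⁻¹) ^ d * (1 + ε / 4) ^ k :=
    le_trans (by rw [hN]; exact_mod_cast hcardT)
      (card_pats_le (fun i => X (g i)) (t := ε / 4) (by positivity) (by linarith))
  have hlog := Real.log_le_log (by linarith) hcardN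
  rw [Real.log_mul (by positivity) (by positivity), Real.log_pow, Real.log_pow, inv_div] at hlog
  have h9 : Real.log (1 + ε / 4) ≤ ε / 4 := by
    linarith [Real.log_le_sub_one_of_pos (show 0 < 1 + ε / 4 by positivity)]
  have h10 : (k : ℝ) * Real.log (1 + ε / 4) ≤ (2 * Real.log N / ε + 1) * (ε / 4) :=
    mul_le_mul hk2 h9 (Real.log_nonneg (by linarith)) (by positivity)
  have h11 : (2 * Real.log N / ε + 1) * (ε / 4) = Real.log N / 2 + ε / 4 := by
    field_simp
    ring
  linarith

/-- A maximal separated subfamily is a net. -/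
lemma exists_net {m : ℕ} (P : Finset (Finset (Fin m))) (hP : P.Nonempty) {r : ℝ} (hr : 0 ≤ r) :
    ∃ T ⊆ P, T.Nonempty ∧ HamSep r T ∧ ∀ A ∈ P, ∃ B ∈ T, ((symmDiff A B).card : ℝ) ≤ r := by
  classical
  obtain ⟨T, hT, hmax⟩ := Finset.exists_max_image (P.powerset.filter (HamSep r)) Finset.card
    ⟨∅, by simp [HamSep]⟩
  simp only [Finset.mem_filter, Finset.mem_powerset] at hT hmax
  have hnet : ∀ A ∈ P, ∃ B ∈ T, ((symmDiff A B).card : ℝ) ≤ r := by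
    intro A hA
    by_contra hcon
    push Not at hcon
    have hAT : A ∉ T := by
      intro h
      have := hcon A h
      simp at this
      linarith
    have := hmax (insert A T) ⟨Finset.insert_subset hA hT.1, by
      intro B hB C hC hBC
      rw [Finset.mem_insert] at hB hC
      rcases hB with rfl | hB <;> rcases hC with rfl | hC
      · exact absurd rfl hBC
      · exact hcon C hC
      · rw [symmDiff_comm]; exact hcon B hB
      · exact hT.2 B hB C hC hBC⟩
    rw [Finset.card_insert_of_notMem hAT] at this
    omega
  obtain ⟨A, hA⟩ := hP
  obtain ⟨B, hB, _⟩ := hnet A hA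
  exact ⟨T, hT.1, ⟨B, hB⟩, hT.2, hnet⟩

/-! ### Chaining over the sign cube -/

/-- The sign attached to a Boolean. -/
noncomputable def rsgn (b : Bool) : ℝ := if b then 1 else -1

/-- The `±1` vector of a pattern. -/
noncomputable def sgv {m : ℕ} (A : Finset (Fin m)) (i : Fin m) : ℝ := if i ∈ A then 1 else -1

/-- Expectation over uniform Boolean signs. -/
noncomputable def cubeAvg {m : ℕ} (g : (Fin m → Bool) → ℝ) : ℝ := ((2 : ℝ) ^ m)⁻¹ * ∑ b, g b

lemma cubeAvg_mono {m : ℕ} {g h : (Fin m → Bool) → ℝ} (H : ∀ b, g b ≤ h b) :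
    cubeAvg g ≤ cubeAvg h := by
  unfold cubeAvg
  gcongr with b
  exact H b

lemma cubeAvg_add {m : ℕ} (g h : (Fin m → Bool) → ℝ) :
    cubeAvg (fun b => g b + h b) = cubeAvg g + cubeAvg h := by
  simp [cubeAvg, Finset.sum_add_distrib, mul_add]

lemma cubeAvg_const_mul {m : ℕ} (c : ℝ) (g : (Fin m → Bool) → ℝ) :
    cubeAvg (fun b => c * g b) = c * cubeAvg g := by
  simp only [cubeAvg, ← Finset.mul_sum]
  ring

lemma cubeAvg_const {m : ℕ} (c : ℝ) : cubeAvg (fun _ : Fin m → Bool => c) = c := by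
  simp [cubeAvg]

lemma cubeAvg_sum {m : ℕ} {ι : Type*} (T : Finset ι) (g : ι → (Fin m → Bool) → ℝ) :
    cubeAvg (fun b => ∑ t ∈ T, g t b) = ∑ t ∈ T, cubeAvg (g t) := by
  simp only [cubeAvg, ← Finset.mul_sum]
  rw [Finset.sum_comm]

lemma cubeAvg_exp_le {m : ℕ} (v : Fin m → ℝ) :
    cubeAvg (fun b => Real.exp (∑ i, rsgn (b i) * v i)) ≤ Real.exp ((∑ i, v i ^ 2) / 2) := by
  have h1 : cubeAvg (fun b => Real.exp (∑ i, rsgn (b i) * v i)) = ∏ i, Real.cosh (v i) := by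
    have h2 : ∑ b : Fin m → Bool, Real.exp (∑ i, rsgn (b i) * v i)
        = ∏ i, ∑ c : Bool, Real.exp (rsgn c * v i) := by
      rw [Finset.prod_univ_sum]
      simp only [Real.exp_sum, Fintype.piFinset_univ]
    rw [cubeAvg, h2]
    have h3 : ∀ i, ∑ c : Bool, Real.exp (rsgn c * v i) = 2 * Real.cosh (v i) := by
      intro i
      rw [Real.cosh_eq]
      simp [rsgn]
      ring
    simp_rw [h3]
    rw [Finset.prod_mul_distrib]
    simp
  rw [h1, Finset.sum_div, Real.exp_sum]
  exact Finset.prod_le_prod (fun i _ => (Real.cosh_pos _).le)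
    fun i _ => Real.cosh_le_exp_half_sq _

/-- Massart's finite class lemma, with the exponential parameter `l` left free. -/
lemma massart {m : ℕ} {ι : Type*} (T : Finset ι) (hT : T.Nonempty) (v : ι → Fin m → ℝ) {V : ℝ}
    (hV : ∀ t ∈ T, ∑ i, v t i ^ 2 ≤ V) {l : ℝ} (hl : 0 < l) :
    cubeAvg (fun b => ⨆ t : T, ∑ i, rsgn (b i) * v t i)
      ≤ Real.log T.card / l + l * V / 2 := by
  have : Nonempty T := hT.to_subtype
  set N : ℝ := (T.card : ℝ) with hN
  have hNpos : 0 < N := by rw [hN]; exact_mod_cast hT.card_pos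
  set L : ℝ := Real.log N + l ^ 2 * V / 2 with hL
  -- the tangent bound `y ≤ L - 1 + exp (y - L)` replaces Jensen's inequality
  have hpt : ∀ b : Fin m → Bool, l * (⨆ t : T, ∑ i, rsgn (b i) * v t i) ≤
      (L - 1) + Real.exp (-L) * ∑ t ∈ T, Real.exp (∑ i, rsgn (b i) * (l * v t i)) := by
    intro b
    obtain ⟨t, ht⟩ := exists_eq_ciSup_of_finite (f := fun t : T => ∑ i, rsgn (b i) * v t i)
    rw [← ht]
    have h1 : l * ∑ i, rsgn (b i) * v t i = ∑ i, rsgn (b i) * (l * v t i) := by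
      rw [Finset.mul_sum]
      exact Finset.sum_congr rfl fun _ _ => by ring
    have h2 : Real.exp (∑ i, rsgn (b i) * (l * v t i)) ≤
        ∑ t ∈ T, Real.exp (∑ i, rsgn (b i) * (l * v t i)) :=
      Finset.single_le_sum (f := fun t => Real.exp (∑ i, rsgn (b i) * (l * v t i)))
        (fun _ _ => (Real.exp_pos _).le) t.2
    have h3 := Real.add_one_le_exp (-L + ∑ i, rsgn (b i) * (l * v t i))
    rw [Real.exp_add] at h3
    have h4 := mul_le_mul_of_nonneg_left h2 (Real.exp_pos (-L)).le
    rw [h1]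
    linarith
  have h5 := cubeAvg_mono hpt
  rw [cubeAvg_const_mul, cubeAvg_add, cubeAvg_const, cubeAvg_const_mul, cubeAvg_sum] at h5
  have h6 : ∑ t ∈ T, cubeAvg (fun b => Real.exp (∑ i, rsgn (b i) * (l * v t i)))
      ≤ N * Real.exp (l ^ 2 * V / 2) := by
    rw [hN, ← nsmul_eq_mul]
    apply Finset.sum_le_card_nsmul
    intro t ht
    refine (cubeAvg_exp_le _).trans (Real.exp_le_exp.2 ?_)
    simp_rw [mul_pow]
    rw [← Finset.mul_sum]
    have := hV t ht
    gcongr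
  have h7 : Real.exp (-L) * (N * Real.exp (l ^ 2 * V / 2)) = 1 := by
    have : N * Real.exp (l ^ 2 * V / 2) = Real.exp L := by
      rw [hL, Real.exp_add, Real.exp_log hNpos]
    rw [this, ← Real.exp_add]
    simp
  have h8 := mul_le_mul_of_nonneg_left h6 (Real.exp_pos (-L)).le
  have h9 : l * cubeAvg (fun b => ⨆ t : T, ∑ i, rsgn (b i) * v t i) ≤ L := by linarith
  have h10 : Real.log N / l + l * V / 2 = L / l := by
    rw [hL]; field_simp
  rw [h10, le_div_iff₀ hl]
  linarith

/-- Expected supremum of the Rademacher process over a family of patterns. -/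
noncomputable def cubeSup {m : ℕ} (T : Finset (Finset (Fin m))) : ℝ :=
  cubeAvg fun b => ⨆ A : T, ∑ i, rsgn (b i) * sgv A.1 i

lemma sum_sgv_sub_sq {m : ℕ} (A B : Finset (Fin m)) :
    ∑ i, (sgv A i - sgv B i) ^ 2 = 4 * ((symmDiff A B).card : ℝ) := by
  have : ∀ i, (sgv A i - sgv B i) ^ 2 = if i ∈ symmDiff A B then 4 else 0 := by
    intro i
    by_cases hA : i ∈ A <;> by_cases hB : i ∈ B <;>
      simp [sgv, hA, hB, Finset.mem_symmDiff] <;> norm_num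
  simp_rw [this]
  rw [Finset.sum_ite_mem]
  simp
  ring

/-- One chaining link: passing from a net `T` to a family `T'` within Hamming distance `r`. -/
lemma cubeSup_link {m : ℕ} (T T' : Finset (Finset (Fin m))) (hT' : T'.Nonempty)
    {r : ℝ} (hnet : ∀ A ∈ T', ∃ B ∈ T, ((symmDiff A B).card : ℝ) ≤ r) {l : ℝ} (hl : 0 < l) :
    cubeSup T' ≤ cubeSup T + (Real.log T'.card / l + l * (4 * r) / 2) := by
  choose! π hπ hd using hnet
  have : Nonempty T' := hT'.to_subtype
  refine le_trans ?_ (add_le_add le_rfl (massart T' hT' (fun A i => sgv A i - sgv (π A) i)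
    (V := 4 * r) (fun A hA => by rw [sum_sgv_sub_sq]; linarith [hd A hA]) hl))
  rw [cubeSup, cubeSup, ← cubeAvg_add]
  refine cubeAvg_mono fun b => ciSup_le fun A => ?_
  have h1 : ∑ i, rsgn (b i) * sgv (π A) i ≤ ⨆ A : T, ∑ i, rsgn (b i) * sgv A.1 i :=
    le_ciSup (f := fun A : T => ∑ i, rsgn (b i) * sgv A.1 i) (Set.finite_range _).bddAbove
      ⟨π A, hπ A A.2⟩
  have h2 : ∑ i, rsgn (b i) * (sgv A.1 i - sgv (π A) i) ≤
      ⨆ A : T', ∑ i, rsgn (b i) * (sgv A.1 i - sgv (π A) i) :=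
    le_ciSup (f := fun A : T' => ∑ i, rsgn (b i) * (sgv A.1 i - sgv (π A) i))
      (Set.finite_range _).bddAbove A
  have h3 : ∑ i, rsgn (b i) * sgv A.1 i = ∑ i, rsgn (b i) * sgv (π A) i
      + ∑ i, rsgn (b i) * (sgv A.1 i - sgv (π A) i) := by
    rw [← Finset.sum_add_distrib]
    exact Finset.sum_congr rfl fun _ _ => by ring
  linarith

lemma cubeSup_singleton {m : ℕ} (A : Finset (Fin m)) : cubeSup {A} ≤ 0 := by
  refine le_of_forall_pos_le_add fun e he => ?_
  have h := massart ({A} : Finset (Finset (Fin m))) (by simp) (fun A i => sgv A i)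
    (V := m) (by intro t _; simp [sgv]) (l := 2 * e / (m + 1)) (by positivity)
  refine h.trans ?_
  simp
  field_simp
  nlinarith

/-- The chaining bound: every family of halfspace patterns has Rademacher process of size
`O(√(d m))`, with no logarithmic loss. -/
lemma cubeSup_pats_le {d m : ℕ} (hd : 0 < d) (hm : 0 < m) (X : Fin m → Fin d → ℝ) :
    cubeSup (pats X) ≤ 22 * Real.sqrt (d * m) := by
  have hdR : (1 : ℝ) ≤ d := by exact_mod_cast hd
  have hmR : (0 : ℝ) < m := by exact_mod_cast hm
  have hq : ∀ j : ℕ, (0 : ℝ) ≤ (1 / 4) ^ j * m := fun j => by positivity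
  choose T hTP hTne hTsep hTnet using fun j => exists_net (pats X) (pats_nonempty X) (hq j)
  have hlog4 : Real.log 4 ≤ 1.4 := by
    rw [show (4 : ℝ) = 2 ^ 2 by norm_num, Real.log_pow]
    push_cast
    linarith [Real.log_two_lt_d9]
  have hlogcard : ∀ j, Real.log (T j).card ≤ d * (2.8 * j + 3.3) := by
    intro j
    have h := log_card_sep_le hm X (ε := (1 / 4) ^ j) (by positivity)
      (pow_le_one₀ (by norm_num) (by norm_num)) (T j) (hTP j) (hTne j) (hTsep j)
    have h1 : Real.log (4 / (1 / 4) ^ j) ≤ 1.4 * (j + 1) := by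
      rw [show (4 : ℝ) / (1 / 4) ^ j = 4 ^ (j + 1) by
        rw [one_div, inv_pow, div_inv_eq_mul, pow_succ]; ring, Real.log_pow]
      push_cast
      nlinarith
    have h2 : ((1 : ℝ) / 4) ^ j ≤ 1 := pow_le_one₀ (by norm_num) (by norm_num)
    have h3 : 2 * (d : ℝ) * Real.log (4 / (1 / 4) ^ j) ≤ 2 * d * (1.4 * (j + 1)) := by gcongr
    nlinarith
  set s : ℝ := Real.sqrt (d * m) with hs
  have hspos : 0 < s := Real.sqrt_pos.2 (by positivity)
  have hs2 : s * s = d * m := Real.mul_self_sqrt (by positivity)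
  -- the link from scale `j` to scale `j + 1`, with exponential parameter `2 ^ j * √(d / m)`
  have hlink : ∀ (j : ℕ) (T' : Finset (Finset (Fin m))), T' ⊆ pats X → T'.Nonempty →
      Real.log T'.card ≤ d * (2.8 * (j + 1 : ℕ) + 3.3) →
      cubeSup T' ≤ cubeSup (T j) + s * ((2.8 * j + 8.1) * (1 / 2) ^ j) := by
    intro j T' hT' hne hcard
    have h := cubeSup_link (T j) T' hne (fun A hA => hTnet j A (hT' hA))
      (l := 2 ^ j * (s / m)) (by positivity)
    refine h.trans (add_le_add le_rfl ?_)
    have h1 : Real.log T'.card / (2 ^ j * (s / m)) ≤ s * ((2.8 * j + 6.1) * (1 / 2) ^ j) := by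
      rw [div_le_iff₀ (by positivity)]
      refine hcard.trans (le_of_eq ?_)
      have h12 : ((1 : ℝ) / 2) ^ j * 2 ^ j = 1 := by rw [← mul_pow]; norm_num
      have : s * ((2.8 * (j:ℝ) + 6.1) * (1 / 2) ^ j) * (2 ^ j * (s / m))
        = (2.8 * j + 6.1) * (((1 : ℝ) / 2) ^ j * 2 ^ j) * (s * s) / m := by ring
      rw [this, h12, hs2]
      push_cast
      field_simp
      ring
    have h2 : 2 ^ j * (s / m) * (4 * ((1 / 4) ^ j * (m : ℝ))) / 2 = s * (2 * (1 / 2) ^ j) := by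
      have h14 : ((1 : ℝ) / 2) ^ j = 2 ^ j * (1 / 4) ^ j := by rw [← mul_pow]; norm_num
      rw [h14]
      field_simp
      ring
    rw [h2]
    linarith
  -- the right side is `s` times the closed form of `0.2 + ∑ i < j, (2.8 i + 8.1) / 2 ^ i`
  have hind : ∀ j : ℕ, cubeSup (T j) ≤ s * (22 - (5.6 * j + 21.8) * (1 / 2) ^ j) := by
    intro j
    induction j with
    | zero =>
      have : ∃ A, T 0 = {A} := by
        rw [← Finset.card_eq_one]
        refine le_antisymm ?_ (hTne 0).card_pos
        rw [Finset.card_le_one]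
        intro A hA B hB
        by_contra hAB
        have h1 := hTsep 0 A hA B hB hAB
        have h2 : (symmDiff A B).card ≤ m := by simpa using Finset.card_le_univ (symmDiff A B)
        have h3 : ((symmDiff A B).card : ℝ) ≤ m := by exact_mod_cast h2
        simp at h1
        linarith
      obtain ⟨A, hA⟩ := this
      rw [hA]
      refine (cubeSup_singleton A).trans ?_
      norm_num
      linarith
    | succ j ih =>
      have h := hlink j (T (j + 1)) (hTP _) (hTne _) (hlogcard _)
      refine h.trans ((add_le_add ih le_rfl).trans (le_of_eq ?_))
      push_cast
      ring
  -- at a scale below `1 / m` the net is the whole family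
  obtain ⟨J, hJ⟩ : ∃ J : ℕ, ((1 : ℝ) / 4) ^ J * m < 1 := by
    obtain ⟨J, hJ⟩ := exists_pow_lt_of_lt_one (show (0 : ℝ) < 1 / m by positivity)
      (show (1 : ℝ) / 4 < 1 by norm_num)
    exact ⟨J, by rwa [lt_div_iff₀ hmR] at hJ⟩
  have hTJ : T J = pats X := by
    refine Finset.Subset.antisymm (hTP J) fun A hA => ?_
    obtain ⟨B, hB, hAB⟩ := hTnet J A hA
    have h1 : ((symmDiff A B).card : ℝ) < 1 := hAB.trans_lt hJ
    have h2 : (symmDiff A B).card = 0 := by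
      have : (symmDiff A B).card < 1 := by exact_mod_cast h1
      omega
    have h3 : A = B := by
      rw [Finset.card_eq_zero] at h2
      exact symmDiff_eq_bot.1 h2
    rwa [h3]
  rw [← hTJ]
  refine (hind J).trans ?_
  have : (0 : ℝ) ≤ (5.6 * J + 21.8) * (1 / 2) ^ J := by positivity
  nlinarith

/-! ### Empirical complexity as a function of the pattern family -/

lemma radMeasure_eq :
    radMeasure = ((PMF.bernoulli 2⁻¹ (by norm_num)).toMeasure).map rsgn := by
  rw [radMeasure, PMF.toMeasure_map]
  · rfl
  · exact measurable_of_finite _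

lemma bern_singleton (b : Bool) :
    ((PMF.bernoulli 2⁻¹ (by norm_num)).toMeasure).real {b} = 2⁻¹ := by
  rw [Measure.real, PMF.toMeasure_apply_singleton _ _ (measurableSet_singleton _),
    PMF.bernoulli_apply]
  cases b <;> norm_num

/-- The integral against Rademacher signs is the average over the Boolean cube; no measurability is
needed because the sign measure is finitely supported. -/
lemma integral_rad {m : ℕ} (g : (Fin m → ℝ) → ℝ) :
    ∫ ε, g ε ∂(Measure.pi fun _ : Fin m => radMeasure) = cubeAvg fun b => g fun i => rsgn (b i) := by
  have h1 : (Measure.pi fun _ : Fin m => radMeasure) =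
      (Measure.pi fun _ : Fin m => (PMF.bernoulli 2⁻¹ (by norm_num)).toMeasure).map
        fun b i => rsgn (b i) := by
    rw [radMeasure_eq]
    exact (Measure.pi_map_pi fun _ => (measurable_of_finite _).aemeasurable).symm
  have hinj : Function.Injective fun (b : Fin m → Bool) i => rsgn (b i) := by
    intro b c h
    funext i
    have h2 : rsgn (b i) = rsgn (c i) := congrFun h i
    generalize b i = p at h2 ⊢
    generalize c i = q at h2 ⊢
    revert h2
    cases p <;> cases q <;> simp [rsgn] <;> norm_num
  have hemb : MeasurableEmbedding fun (b : Fin m → Bool) i => rsgn (b i) :=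
    (measurable_of_finite _).measurableEmbedding hinj
  rw [h1, hemb.integral_map, integral_fintype .of_finite, cubeAvg, Finset.mul_sum]
  refine Finset.sum_congr rfl fun b _ => ?_
  rw [smul_eq_mul, Measure.real, Measure.pi_singleton, ENNReal.toReal_prod]
  congr 1
  have h2 := fun i => bern_singleton (b i)
  simp only [Measure.real] at h2
  rw [Finset.prod_congr rfl fun i _ => h2 i]
  simp

lemma sgn_scale {c : ℝ} (hc : 0 < c) (t : ℝ) : sgn (c * t) = sgn t := by
  simp [sgn, mul_nonneg_iff_of_pos_left hc]

lemma iSup_signClass {d m : ℕ} (hd : 0 < d) (X : Fin m → Fin d → ℝ) (ε : Fin m → ℝ) :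
    (⨆ f : signClass d, (m : ℝ)⁻¹ * ∑ μ, ε μ * f.1 (X μ)) =
      ⨆ A : pats X, (m : ℝ)⁻¹ * ∑ μ, ε μ * sgv A.1 μ := by
  have hc : 0 < (Real.sqrt d)⁻¹ := inv_pos.2 (Real.sqrt_pos.2 (by exact_mod_cast hd))
  rw [iSup, iSup]
  congr 1
  ext y
  simp only [Set.mem_range]
  constructor
  · rintro ⟨⟨f, w, rfl⟩, rfl⟩
    refine ⟨⟨Finset.univ.filter fun i => 0 ≤ ∑ j, w j * X i j, mem_pats.2 ⟨w, by simp⟩⟩, ?_⟩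
    simp only [sgn_scale hc]
    simp [sgv, sgn]
  · rintro ⟨⟨A, hA⟩, rfl⟩
    obtain ⟨w, hw⟩ := mem_pats.1 hA
    refine ⟨⟨_, w, rfl⟩, ?_⟩
    simp only [sgn_scale hc]
    simp [sgv, sgn, hw]

lemma empRad_eq {d m : ℕ} (hd : 0 < d) (X : Fin m → Fin d → ℝ) :
    empRad (signClass d) X = (m : ℝ)⁻¹ * cubeSup (pats X) := by
  rw [empRad, integral_rad, cubeSup, ← cubeAvg_const_mul]
  congr 1
  funext b
  rw [iSup_signClass hd, Real.mul_iSup_of_nonneg (by positivity)]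

lemma empRad_le {d m : ℕ} (hd : 0 < d) (hm : 0 < m) (X : Fin m → Fin d → ℝ) :
    empRad (signClass d) X ≤ 22 * Real.sqrt (d / m) := by
  have hmR : (0 : ℝ) < m := by exact_mod_cast hm
  rw [empRad_eq hd]
  have h := mul_le_mul_of_nonneg_left (cubeSup_pats_le hd hm X) (inv_nonneg.2 hmR.le)
  refine h.trans (le_of_eq ?_)
  have : (d : ℝ) / m = d * m / m ^ 2 := by field_simp
  rw [this, Real.sqrt_div (by positivity), Real.sqrt_sq hmR.le]
  ring

/-- Realizability of a pattern is an `F_σ` condition on the sample: bound `w` and `X`, and make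
the strict inequalities quantitative, to write it as a union of projections of compact sets. -/
lemma measurableSet_mem_pats {d m : ℕ} (A : Finset (Fin m)) :
    MeasurableSet {X : Fin m → Fin d → ℝ | A ∈ pats X} := by
  let K : ℕ → Set ((Fin d → ℝ) × (Fin m → Fin d → ℝ)) := fun n =>
    Metric.closedBall 0 n ∩ ⋂ i, {p | (i ∈ A → 0 ≤ ∑ j, p.1 j * p.2 i j) ∧
      (i ∉ A → ∑ j, p.1 j * p.2 i j ≤ -(1 / ((n : ℝ) + 1)))}
  have hK : ∀ n, IsCompact (K n) := by
    intro n
    refine (isCompact_closedBall _ _).inter_right (isClosed_iInter fun i => ?_)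
    by_cases hi : i ∈ A
    · simp only [hi, true_imp_iff, not_true, false_imp_iff, and_true]
      exact isClosed_le (by fun_prop) (by fun_prop)
    · simp only [hi, true_imp_iff, not_false_eq_true, false_imp_iff, true_and]
      exact isClosed_le (by fun_prop) (by fun_prop)
  have hset : {X : Fin m → Fin d → ℝ | A ∈ pats X} = ⋃ n, Prod.snd '' K n := by
    ext X
    simp only [Set.mem_ofPred_eq, mem_pats, Set.mem_iUnion, Set.mem_image]
    constructor
    · rintro ⟨w, hw⟩
      have h1 : ∀ i, ∃ n : ℕ, i ∉ A → ∑ j, w j * X i j ≤ -(1 / ((n : ℝ) + 1)) := by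
        intro i
        by_cases hi : i ∈ A
        · exact ⟨0, fun h => absurd hi h⟩
        · have h2 : ∑ j, w j * X i j < 0 := not_le.1 fun h => hi ((hw i).2 h)
          obtain ⟨n, hn⟩ := exists_nat_one_div_lt (neg_pos.2 h2)
          exact ⟨n, fun _ => by linarith⟩
      choose N hN using h1
      obtain ⟨n₀, hn₀⟩ := exists_nat_ge ‖(w, X)‖
      refine ⟨n₀ + ∑ i, N i, (w, X), ⟨?_, ?_⟩, rfl⟩
      · rw [mem_closedBall_zero_iff]
        push_cast
        have : (0 : ℝ) ≤ ∑ i, (N i : ℝ) := by positivity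
        linarith
      · refine Set.mem_iInter.2 fun i => ⟨fun hi => (hw i).1 hi, fun hi => (hN i hi).trans ?_⟩
        have : N i ≤ n₀ + ∑ i, N i :=
          (Finset.single_le_sum (f := N) (fun _ _ => Nat.zero_le _) (Finset.mem_univ i)).trans
            (Nat.le_add_left _ _)
        have : (N i : ℝ) ≤ ((n₀ + ∑ i, N i : ℕ) : ℝ) := by exact_mod_cast this
        gcongr
    · rintro ⟨n, ⟨w, X'⟩, ⟨-, h⟩, rfl⟩
      refine ⟨w, fun i => ?_⟩
      obtain ⟨h1, h2⟩ := Set.mem_iInter.1 h i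
      refine ⟨h1, fun h3 => ?_⟩
      by_contra hi
      have h4 := h2 hi
      have : (0 : ℝ) < 1 / ((n : ℝ) + 1) := by positivity
      simp only at h3 h4
      linarith
  rw [hset]
  exact MeasurableSet.iUnion fun n => ((hK n).image continuous_snd).isClosed.measurableSet

lemma measurable_empRad {d m : ℕ} (hd : 0 < d) :
    Measurable fun X : Fin m → Fin d → ℝ => empRad (signClass d) X := by
  let _ : MeasurableSpace (Finset (Finset (Fin m))) := ⊤
  have h : Measurable fun X : Fin m → Fin d → ℝ => pats X := by
    refine measurable_to_countable' fun Q => ?_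
    have : (fun X : Fin m → Fin d → ℝ => pats X) ⁻¹' {Q} =
        ⋂ A : Finset (Fin m), {X | A ∈ pats X ↔ A ∈ Q} := by
      ext X
      simp [Finset.ext_iff]
    rw [this]
    refine MeasurableSet.iInter fun A => ?_
    by_cases hA : A ∈ Q
    · simpa [hA] using measurableSet_mem_pats A
    · simp only [hA, iff_false]
      exact (measurableSet_mem_pats A).compl
  have h2 : Measurable fun Q : Finset (Finset (Fin m)) => (m : ℝ)⁻¹ * cubeSup Q :=
    measurable_from_top
  simp_rw [empRad_eq hd]
  exact h2.comp h

lemma popRad_le {d m : ℕ} (hd : 0 < d) (hm : 0 < m) :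
    popRad (signClass d) (Measure.pi fun _ : Fin m => stdGaussian d) ≤ 22 * Real.sqrt (d / m) := by
  have : IsProbabilityMeasure (_root_.stdGaussian d) := by
    unfold _root_.stdGaussian; infer_instance
  rw [popRad]
  by_cases hInt : Integrable (fun X => empRad (signClass d) X)
      (Measure.pi fun _ : Fin m => _root_.stdGaussian d)
  · refine (integral_mono hInt (integrable_const _) fun X => empRad_le hd hm X).trans ?_
    simp
  · rw [integral_undef hInt]
    positivity

/-! ### Gaussian estimates -/

lemma gauss_lin {n : ℕ} (a : Fin n → ℝ) (v V : NNReal) (hV : (V : ℝ) = v * ∑ i, a i ^ 2) :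
    (Measure.pi fun _ : Fin n => gaussianReal 0 v).map (fun x => ∑ i, a i * x i)
      = gaussianReal 0 V := by
  have hmeas : Measurable fun x : Fin n → ℝ => ∑ i, a i * x i := by fun_prop
  have : IsProbabilityMeasure ((Measure.pi fun _ : Fin n => gaussianReal 0 v).map
      (fun x => ∑ i, a i * x i)) := Measure.isProbabilityMeasure_map hmeas.aemeasurable
  apply Measure.ext_of_charFun
  funext t
  rw [charFun_apply_real, integral_map hmeas.aemeasurable (by fun_prop), charFun_gaussianReal]
  have h1 : ∀ x : Fin n → ℝ, Complex.exp (t * ((∑ i, a i * x i : ℝ) : ℂ) * Complex.I)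
      = ∏ i, Complex.exp (((t * a i : ℝ) : ℂ) * (x i : ℂ) * Complex.I) := by
    intro x
    rw [← Complex.exp_sum]
    congr 1
    push_cast
    rw [Finset.mul_sum, Finset.sum_mul]
    exact Finset.sum_congr rfl fun _ _ => by ring
  simp_rw [h1]
  rw [integral_fintype_prod_eq_prod
    (f := fun i (x : ℝ) => Complex.exp (((t * a i : ℝ) : ℂ) * (x : ℂ) * Complex.I))]
  simp_rw [← charFun_apply_real, charFun_gaussianReal]
  rw [← Complex.exp_sum]
  congr 1
  have h2 : ((V : ℝ) : ℂ) = (v : ℝ) * ∑ i, (a i : ℂ) ^ 2 := by rw [hV]; push_cast; rfl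
  rw [h2]
  push_cast
  simp only [Finset.mul_sum, Finset.sum_mul, Finset.sum_div, mul_zero, zero_mul, zero_sub,
    Finset.sum_neg_distrib]
  congr 1
  exact Finset.sum_congr rfl fun _ _ => by ring

/-- The sign with value `-1` at `0`; it bounds `c * sgn (c * t)` from below for `c = ±1`. -/
noncomputable def lsgn (t : ℝ) : ℝ := if 0 < t then 1 else -1

lemma measurable_lsgn : Measurable lsgn :=
  Measurable.ite measurableSet_Ioi measurable_const measurable_const

lemma abs_lsgn (t : ℝ) : |lsgn t| ≤ 1 := by
  unfold lsgn; split_ifs <;> simp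

lemma integrable_lsgn_comp {Ω : Type*} [MeasurableSpace Ω] (P : Measure Ω)
    [IsProbabilityMeasure P] {f : Ω → ℝ} (hf : Measurable f) :
    Integrable (fun x => lsgn (f x)) P :=
  Integrable.of_bound (measurable_lsgn.comp hf).aestronglyMeasurable 1
    (Filter.Eventually.of_forall fun _ => abs_lsgn _)

/-- Twice the minimum of the standard normal density on `[-1, 1]`. -/
noncomputable def kap : ℝ := 2 * ((Real.sqrt (2 * Real.pi))⁻¹ * Real.exp (-1 / 2))

lemma kap_pos : 0 < kap := by unfold kap; positivity

/-- On `[-√V, √V]` the density of `N(0, V)` is at least `kap / (2 √V)`. -/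
lemma gauss_Ioo {V : NNReal} (hV : V ≠ 0) {s : ℝ} (hs : 0 ≤ s) (hsV : s ≤ Real.sqrt V) :
    kap * (s / Real.sqrt V) ≤ (gaussianReal 0 V).real (Set.Ioo (-s) s) := by
  have hVp : (0 : ℝ) < V := by exact_mod_cast pos_iff_ne_zero.2 hV
  rw [Measure.real, gaussianReal_apply_eq_integral _ hV, ENNReal.toReal_ofReal
    (setIntegral_nonneg measurableSet_Ioo fun x _ => gaussianPDFReal_nonneg _ _ _)]
  have h1 : ∫ _ in Set.Ioo (-s) s, (Real.sqrt (2 * Real.pi * V))⁻¹ * Real.exp (-1 / 2) ≤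
      ∫ x in Set.Ioo (-s) s, gaussianPDFReal 0 V x := by
    refine setIntegral_mono_on (integrableOn_const (by simp))
      (integrable_gaussianPDFReal _ _).integrableOn measurableSet_Ioo fun x hx => ?_
    rw [gaussianPDFReal]
    have hx2 : x ^ 2 ≤ V := by
      rw [← Real.sq_sqrt hVp.le]
      exact sq_le_sq' (by linarith [hx.1]) (by linarith [hx.2])
    refine mul_le_mul_of_nonneg_left (Real.exp_le_exp.2 ?_) (by positivity)
    rw [sub_zero, div_le_div_iff₀ (by norm_num) (by positivity)]
    linarith
  refine le_trans (le_of_eq ?_) h1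
  rw [setIntegral_const, Measure.real, Real.volume_Ioo, ENNReal.toReal_ofReal (by linarith), kap,
    Real.sqrt_mul (by positivity) (V : ℝ), smul_eq_mul, mul_inv]
  ring

/-- A centred Gaussian shifted by `a > 0` is positive with probability exceeding `1/2` by an
amount linear in `a / σ`, up to saturation. -/
lemma gauss_shift {V : NNReal} (hV : V ≠ 0) {a : ℝ} (ha : 0 < a) :
    kap * min (a / Real.sqrt V) 1 ≤ ∫ z, lsgn (a + z) ∂(gaussianReal 0 V) := by
  have hVp : (0 : ℝ) < V := by exact_mod_cast pos_iff_ne_zero.2 hV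
  have hsq : 0 < Real.sqrt V := Real.sqrt_pos.2 hVp
  set s := min a (Real.sqrt V) with hs
  have hs0 : 0 ≤ s := le_min ha.le hsq.le
  have h1 : min (a / Real.sqrt V) 1 = s / Real.sqrt V := by
    rw [hs, ← min_div_div_right hsq.le, div_self hsq.ne']
  rw [h1]
  refine (gauss_Ioo hV hs0 (min_le_right _ _)).trans ?_
  have hi1 : Integrable (fun z => lsgn (a + z)) (gaussianReal 0 V) :=
    integrable_lsgn_comp _ (by fun_prop)
  have hi2 : Integrable (fun z => lsgn (a - z)) (gaussianReal 0 V) :=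
    integrable_lsgn_comp _ (by fun_prop)
  have hsymm : ∫ z, lsgn (a + z) ∂(gaussianReal 0 V) = ∫ z, lsgn (a - z) ∂(gaussianReal 0 V) := by
    have h := gaussianReal_map_neg (μ := 0) (v := V)
    rw [neg_zero] at h
    have hm : Measurable fun z : ℝ => lsgn (a + z) :=
      measurable_lsgn.comp (by fun_prop : Measurable fun z : ℝ => a + z)
    conv_lhs => rw [← h]
    rw [integral_map (by fun_prop) hm.aestronglyMeasurable]
    simp only [sub_eq_add_neg]
  have h2 : ∫ z, (Set.Ioo (-s) s).indicator (fun _ => (2 : ℝ)) z ∂(gaussianReal 0 V) ≤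
      ∫ z, (lsgn (a + z) + lsgn (a - z)) ∂(gaussianReal 0 V) := by
    refine integral_mono ((integrable_const _).indicator measurableSet_Ioo) (hi1.add hi2) ?_
    intro z
    by_cases hz : z ∈ Set.Ioo (-s) s
    · have hsa : s ≤ a := min_le_left _ _
      have h3 : 0 < a + z := by linarith [hz.1]
      have h4 : 0 < a - z := by linarith [hz.2]
      simp [hz, lsgn, h3, h4]
      norm_num
    · simp only [hz, Set.indicator_of_notMem, not_false_eq_true]
      unfold lsgn
      split_ifs <;> linarith
  rw [integral_indicator_const _ measurableSet_Ioo, integral_add hi1 hi2, ← hsymm, smul_eq_mul] at h2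
  linarith

/-- Cauchy–Schwarz lower bound for `min (‖y‖ / √n) 1` by an average of functions of single
coordinates, whose Gaussian mean is `truncMoment` in every dimension. -/
lemma min_norm_lower {d n : ℕ} {α : ℝ} (hα : 1 ≤ α) (hd : 0 < d) (hn : 0 < n)
    (hnα : (n : ℝ) ≤ α * d) (y : Fin d → ℝ) :
    (Real.sqrt α)⁻¹ * ((d : ℝ)⁻¹ * ∑ j, min |y j| 1) ≤
      min (Real.sqrt (∑ j, y j ^ 2) / Real.sqrt n) 1 := by
  have hdR : (0 : ℝ) < d := by exact_mod_cast hd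
  have hnR : (0 : ℝ) < n := by exact_mod_cast hn
  have hsα : 1 ≤ Real.sqrt α := Real.one_le_sqrt.2 hα
  have hnn : 0 ≤ (d : ℝ)⁻¹ * ∑ j, min |y j| 1 :=
    mul_nonneg (by positivity) (Finset.sum_nonneg fun j _ => le_min (abs_nonneg _) zero_le_one)
  apply le_min
  · have h1 : ∑ j, min |y j| 1 ≤ Real.sqrt d * Real.sqrt (∑ j, y j ^ 2) := by
      refine (Finset.sum_le_sum fun j _ => min_le_left |y j| 1).trans ?_
      rw [← Real.sqrt_mul hdR.le]
      apply Real.le_sqrt_of_sq_le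
      have := sq_sum_le_card_mul_sum_sq (s := Finset.univ) (f := fun j => |y j|)
      simpa using this
    rw [le_div_iff₀ (Real.sqrt_pos.2 hnR)]
    have h2 : Real.sqrt n ≤ Real.sqrt α * Real.sqrt d := by
      rw [← Real.sqrt_mul (by linarith)]
      exact Real.sqrt_le_sqrt hnα
    have h3 : Real.sqrt d * Real.sqrt d = d := Real.mul_self_sqrt hdR.le
    have h3' : 0 < Real.sqrt d := Real.sqrt_pos.2 hdR
    calc (Real.sqrt α)⁻¹ * ((d : ℝ)⁻¹ * ∑ j, min |y j| 1) * Real.sqrt n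
        ≤ (Real.sqrt α)⁻¹ * ((d : ℝ)⁻¹ * (Real.sqrt d * Real.sqrt (∑ j, y j ^ 2))) *
          (Real.sqrt α * Real.sqrt d) := by gcongr
      _ = ((Real.sqrt α)⁻¹ * Real.sqrt α) * ((d : ℝ)⁻¹ * (Real.sqrt d * Real.sqrt d))
          * Real.sqrt (∑ j, y j ^ 2) := by ring
      _ = Real.sqrt (∑ j, y j ^ 2) := by
          rw [h3, inv_mul_cancel₀ (by positivity), inv_mul_cancel₀ (by positivity)]; ring
  · have h1 : ∑ j, min |y j| 1 ≤ d := by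
      refine (Finset.sum_le_sum fun j _ => min_le_right |y j| 1).trans ?_
      simp
    have h2 : (d : ℝ)⁻¹ * ∑ j, min |y j| 1 ≤ 1 := by
      rw [inv_mul_le_iff₀ hdR]; linarith
    exact mul_le_one₀ (inv_le_one_of_one_le₀ hsα) hnn h2

/-- The truncated first absolute moment of a standard normal variable. -/
noncomputable def truncMoment : ℝ := ∫ x, min |x| 1 ∂(gaussianReal 0 1)

lemma integrable_trunc {Ω : Type*} [MeasurableSpace Ω] (P : Measure Ω)
    [IsProbabilityMeasure P] {f : Ω → ℝ} (hf : Measurable f) :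
    Integrable (fun x => min |f x| 1) P :=
  Integrable.of_bound (by fun_prop) 1
    (Filter.Eventually.of_forall fun x => by
      rw [Real.norm_eq_abs, abs_of_nonneg (le_min (abs_nonneg _) zero_le_one)]
      exact min_le_right _ _)

lemma truncMoment_pos : 0 < truncMoment := by
  have hn : ∀ x : ℝ, 0 ≤ min |x| 1 := fun x => le_min (abs_nonneg _) zero_le_one
  rw [truncMoment, integral_pos_iff_support_of_nonneg hn (integrable_trunc _ measurable_id')]
  have : Function.support (fun x : ℝ => min |x| 1) = {0}ᶜ := by
    ext x
    simp only [Function.mem_support, Set.mem_compl_iff, Set.mem_singleton_iff, not_iff_not]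
    constructor
    · intro h
      rcases min_choice |x| 1 with h1 | h1 <;> rw [h1] at h
      · exact abs_eq_zero.1 h
      · norm_num at h
    · rintro rfl; simp
  have := nullSingletonClass_gaussianReal (μ := 0) (v := 1) one_ne_zero
  rw [‹Function.support _ = _›, prob_compl_eq_one_sub (measurableSet_singleton _)]
  simp

/-! ### Lower bound from the Hebb rule -/

instance (d : ℕ) : IsProbabilityMeasure (_root_.stdGaussian d) := by
  unfold _root_.stdGaussian; infer_instance

/-- Conditionally on the sample point `y`, the alignment of the Hebb vector with `y` is
`‖y‖² + ‖y‖ √n g` with `g` standard normal, so its mean sign is at least `kap * min (‖y‖ / √n) 1`.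
Here `Z` holds the `n` other sample points and `a` their relative signs. -/
lemma hebb_inner {d n : ℕ} (hn : 0 < n) (a : Fin n → ℝ) (ha : ∀ k, a k ^ 2 = 1)
    (y : Fin d → ℝ) (hy : y ≠ 0) :
    kap * min (Real.sqrt (∑ j, y j ^ 2) / Real.sqrt n) 1 ≤
      ∫ Z : Fin n → Fin d → ℝ, lsgn (∑ j, y j ^ 2 + ∑ k, a k * ∑ j, y j * Z k j)
        ∂(Measure.pi fun _ : Fin n => _root_.stdGaussian d) := by
  set q : ℝ := ∑ j, y j ^ 2 with hq
  have hq0 : 0 < q := by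
    obtain ⟨j, hj⟩ := Function.ne_iff.1 hy
    exact Finset.sum_pos' (fun _ _ => sq_nonneg _) ⟨j, Finset.mem_univ _, by
      have : y j ≠ 0 := hj
      positivity⟩
  have hnR : (0 : ℝ) < n := by exact_mod_cast hn
  set v : NNReal := q.toNNReal with hv
  have hvq : (v : ℝ) = q := Real.coe_toNNReal _ hq0.le
  set V : NNReal := v * n with hV
  have hVq : (V : ℝ) = q * n := by rw [hV]; push_cast; rw [hvq]
  have hV0 : V ≠ 0 := by
    intro h
    have : (V : ℝ) = 0 := by rw [h]; simp
    rw [hVq] at this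
    have := mul_pos hq0 hnR
    linarith
  have h1 : (_root_.stdGaussian d).map (fun x => ∑ j, y j * x j) = gaussianReal 0 v :=
    gauss_lin y 1 v (by rw [hvq]; simp [hq])
  have hm1 : Measurable fun x : Fin d → ℝ => ∑ j, y j * x j := by fun_prop
  have h2 : (Measure.pi fun _ : Fin n => _root_.stdGaussian d).map
      (fun Z k => ∑ j, y j * Z k j) = Measure.pi fun _ : Fin n => gaussianReal 0 v := by
    rw [← h1]
    have : IsProbabilityMeasure ((_root_.stdGaussian d).map (fun x => ∑ j, y j * x j)) :=
      Measure.isProbabilityMeasure_map hm1.aemeasurable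
    exact Measure.pi_map_pi (f := fun _ (x : Fin d → ℝ) => ∑ j, y j * x j) fun _ => hm1.aemeasurable
  have hm2 : Measurable fun x : Fin n → ℝ => ∑ k, a k * x k := by fun_prop
  have hm3 : Measurable fun (Z : Fin n → Fin d → ℝ) (k : Fin n) => ∑ j, y j * Z k j := by
    fun_prop
  have h3 : (Measure.pi fun _ : Fin n => _root_.stdGaussian d).map
      (fun Z => ∑ k, a k * ∑ j, y j * Z k j) = gaussianReal 0 V := by
    rw [← gauss_lin a v V (by rw [hVq, hvq]; simp [ha]), ← h2, Measure.map_map hm2 hm3]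
    rfl
  have hm4 : Measurable fun z : ℝ => lsgn (q + z) :=
    measurable_lsgn.comp (by fun_prop : Measurable fun z : ℝ => q + z)
  have hm5 : Measurable fun Z : Fin n → Fin d → ℝ => ∑ k, a k * ∑ j, y j * Z k j := by
    fun_prop
  have h4 := gauss_shift hV0 hq0
  rw [← h3, integral_map hm5.aemeasurable hm4.aestronglyMeasurable] at h4
  refine le_trans (le_of_eq ?_) h4
  congr 2
  rw [hVq, Real.sqrt_mul hq0.le]
  have hs : Real.sqrt q * Real.sqrt q = q := Real.mul_self_sqrt hq0.le
  have hs0 : 0 < Real.sqrt q := Real.sqrt_pos.2 hq0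
  have hs1 : 0 < Real.sqrt n := Real.sqrt_pos.2 hnR
  rw [div_eq_div_iff hs1.ne' (by positivity), ← mul_assoc, hs]

/-- For fixed signs `c`, the Hebb vector `∑ c ν • X ν` classifies the point `X i` correctly with a
margin of order `1 / √α` over chance. -/
lemma hebb_term {d n : ℕ} {α : ℝ} (hα : 1 ≤ α) (hd : 0 < d) (hn : 0 < n)
    (hnα : (n : ℝ) ≤ α * d) (c : Fin (n + 1) → ℝ) (hc : ∀ i, c i ^ 2 = 1) (i : Fin (n + 1)) :
    kap * truncMoment / Real.sqrt α ≤
      ∫ X : Fin (n + 1) → Fin d → ℝ, lsgn (c i * ∑ j, (∑ ν, c ν * X ν j) * X i j)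
        ∂(Measure.pi fun _ => _root_.stdGaussian d) := by
  let F : (Fin d → ℝ) × (Fin n → Fin d → ℝ) → ℝ := fun p =>
    lsgn (∑ j, p.1 j ^ 2 + ∑ k, (c i * c (i.succAbove k)) * ∑ j, p.1 j * p.2 k j)
  have hF : Measurable fun p : (Fin d → ℝ) × (Fin n → Fin d → ℝ) =>
      ∑ j, p.1 j ^ 2 + ∑ k, (c i * c (i.succAbove k)) * ∑ j, p.1 j * p.2 k j := by fun_prop
  have hFi := integrable_lsgn_comp ((_root_.stdGaussian d).prod
    (Measure.pi fun _ : Fin n => _root_.stdGaussian d)) hF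
  have hmp := measurePreserving_piFinSuccAbove (fun _ : Fin (n + 1) => _root_.stdGaussian d) i
  have h1 : ∀ X : Fin (n + 1) → Fin d → ℝ,
      lsgn (c i * ∑ j, (∑ ν, c ν * X ν j) * X i j) =
        F (MeasurableEquiv.piFinSuccAbove (fun _ => Fin d → ℝ) i X) := by
    intro X
    change _ = lsgn (∑ j, X i j ^ 2 + ∑ k, (c i * c (i.succAbove k)) *
      ∑ j, X i j * X (i.succAbove k) j)
    congr 1
    have h2 : ∀ j, ∑ ν, c ν * X ν j = c i * X i j + ∑ k, c (i.succAbove k) * X (i.succAbove k) j :=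
      fun j => Fin.sum_univ_succAbove _ i
    have h3 : ∀ j, c i * ((∑ ν, c ν * X ν j) * X i j) = X i j ^ 2 +
        ∑ k, (c i * c (i.succAbove k)) * (X i j * X (i.succAbove k) j) := by
      intro j
      rw [h2, add_mul, mul_add, Finset.sum_mul, Finset.mul_sum]
      congr 1
      · linear_combination X i j ^ 2 * hc i
      · exact Finset.sum_congr rfl fun _ _ => by ring
    rw [Finset.mul_sum, Finset.sum_congr rfl fun j _ => h3 j, Finset.sum_add_distrib,
      Finset.sum_comm]
    simp_rw [Finset.mul_sum]
  simp_rw [h1]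
  rw [hmp.integral_comp' (g := F), integral_prod F hFi]
  have hG1 : Integrable (fun y : Fin d → ℝ => kap * ((Real.sqrt α)⁻¹ *
      ((d : ℝ)⁻¹ * ∑ j, min |y j| 1))) (_root_.stdGaussian d) :=
    ((integrable_finsetSum _ fun j _ =>
      integrable_trunc _ (measurable_pi_apply j)).const_mul _ |>.const_mul _).const_mul _
  have hae : ∀ᵐ y ∂(_root_.stdGaussian d), y ≠ 0 := by
    have := nullSingletonClass_gaussianReal (μ := 0) (v := 1) one_ne_zero
    have : Nonempty (Fin d) := ⟨⟨0, hd⟩⟩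
    have : NullSingletonClass (_root_.stdGaussian d) := by
      unfold _root_.stdGaussian; infer_instance
    exact (Set.finite_singleton (0 : Fin d → ℝ)).countable.ae_notMem _
  have h5 : ∫ y, kap * ((Real.sqrt α)⁻¹ * ((d : ℝ)⁻¹ * ∑ j, min |y j| 1)) ∂(_root_.stdGaussian d)
      ≤ ∫ y, ∫ Z, F (y, Z) ∂(Measure.pi fun _ : Fin n => _root_.stdGaussian d)
        ∂(_root_.stdGaussian d) := by
    refine integral_mono_ae hG1 hFi.integral_prod_left ?_
    filter_upwards [hae] with y hy
    refine le_trans ?_ (hebb_inner hn (fun k => c i * c (i.succAbove k))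
      (fun k => by rw [mul_pow, hc, hc, one_mul]) y hy)
    exact mul_le_mul_of_nonneg_left (min_norm_lower hα hd hn hnα y) kap_pos.le
  refine le_trans (le_of_eq ?_) h5
  rw [integral_const_mul, integral_const_mul, integral_const_mul, integral_finsetSum _ fun j _ =>
    integrable_trunc _ (measurable_pi_apply j)]
  have h6 : ∀ j : Fin d, ∫ y : Fin d → ℝ, min |y j| 1 ∂(_root_.stdGaussian d) = truncMoment := by
    intro j
    exact integral_comp_eval (μ := fun _ : Fin d => gaussianReal 0 1) (i := j)
      (f := fun x : ℝ => min |x| 1) (by fun_prop)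
  simp_rw [h6]
  have hdR : (d : ℝ) ≠ 0 := by exact_mod_cast hd.ne'
  simp only [Finset.sum_const, Finset.card_univ, Fintype.card_fin, nsmul_eq_mul]
  field_simp

lemma lsgn_le {c : ℝ} (hc : c = 1 ∨ c = -1) (t : ℝ) : lsgn (c * t) ≤ c * sgn t := by
  rcases hc with rfl | rfl <;> unfold lsgn sgn <;> split_ifs <;>
    first | (exfalso; linarith) | norm_num

lemma rsgn_cases (b : Bool) : rsgn b = 1 ∨ rsgn b = -1 := by
  cases b <;> simp [rsgn]

/-- The sample has `n + 1` points so that `n` remain after singling one out; the hypothesis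
`n ≤ α d` holds for `n + 1 = ⌈α d⌉`. -/
lemma popRad_ge {d n : ℕ} {α : ℝ} (hα : 1 ≤ α) (hd : 0 < d) (hn : 0 < n)
    (hnα : (n : ℝ) ≤ α * d) :
    kap * truncMoment / Real.sqrt α ≤
      popRad (signClass d) (Measure.pi fun _ : Fin (n + 1) => _root_.stdGaussian d) := by
  set P := (Measure.pi fun _ : Fin (n + 1) => _root_.stdGaussian d) with hP
  let H : (Fin (n + 1) → Bool) → Fin (n + 1) → (Fin (n + 1) → Fin d → ℝ) → ℝ := fun b i X =>
    lsgn (rsgn (b i) * ∑ j, (∑ ν, rsgn (b ν) * X ν j) * X i j)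
  have hHi : ∀ b i, Integrable (H b i) P := fun b i => integrable_lsgn_comp _ (by fun_prop)
  have hHS : ∀ b, Integrable (fun X => ∑ i, H b i X) P := fun b =>
    integrable_finsetSum _ fun i _ => hHi b i
  have hm : (0 : ℝ) < ((n + 1 : ℕ) : ℝ) := by positivity
  have hlow : ∀ X, ((n + 1 : ℕ) : ℝ)⁻¹ * cubeAvg (fun b => ∑ i, H b i X) ≤
      empRad (signClass d) X := by
    intro X
    rw [empRad_eq hd, cubeSup]
    refine mul_le_mul_of_nonneg_left (cubeAvg_mono fun b => ?_) (by positivity)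
    let w : Fin d → ℝ := fun j => ∑ ν, rsgn (b ν) * X ν j
    have hA : (Finset.univ.filter fun i => 0 ≤ ∑ j, w j * X i j) ∈ pats X :=
      mem_pats.2 ⟨w, by simp⟩
    refine le_trans ?_ (le_ciSup (f := fun A : pats X => ∑ i, rsgn (b i) * sgv A.1 i)
      (Set.finite_range _).bddAbove ⟨_, hA⟩)
    refine Finset.sum_le_sum fun i _ => (lsgn_le (rsgn_cases _) _).trans (le_of_eq ?_)
    simp [sgv, sgn, w]
  have hlowint : ∫ X, ((n + 1 : ℕ) : ℝ)⁻¹ * cubeAvg (fun b => ∑ i, H b i X) ∂P =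
      ((n + 1 : ℕ) : ℝ)⁻¹ * cubeAvg (fun b => ∑ i, ∫ X, H b i X ∂P) := by
    rw [integral_const_mul]
    congr 1
    simp only [cubeAvg]
    rw [integral_const_mul, integral_finsetSum _ fun b _ => hHS b]
    congr 1
    exact Finset.sum_congr rfl fun b _ => integral_finsetSum _ fun i _ => hHi b i
  have hge : kap * truncMoment / Real.sqrt α ≤
      ((n + 1 : ℕ) : ℝ)⁻¹ * cubeAvg (fun b => ∑ i, ∫ X, H b i X ∂P) := by
    rw [le_inv_mul_iff₀ hm]
    rw [← cubeAvg_const (m := n + 1) (((n + 1 : ℕ) : ℝ) * (kap * truncMoment / Real.sqrt α))]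
    refine cubeAvg_mono fun b => ?_
    have := Finset.card_nsmul_le_sum Finset.univ (fun i => ∫ X, H b i X ∂P) _ fun i _ =>
      hebb_term hα hd hn hnα (fun ν => rsgn (b ν))
        (fun ν => by rcases rsgn_cases (b ν) with h | h <;> rw [h] <;> norm_num) i
    simpa using this
  refine hge.trans (hlowint ▸ ?_)
  rw [popRad]
  refine integral_mono ?_ ?_ hlow
  · refine Integrable.const_mul ?_ _
    simp only [cubeAvg]
    exact (integrable_finsetSum _ fun b _ => hHS b).const_mul _
  · -- `empRad` takes finitely many values since it factors through `pats`
    obtain ⟨C, hC⟩ := (Set.finite_range fun Q : Finset (Finset (Fin (n + 1))) =>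
      |((n + 1 : ℕ) : ℝ)⁻¹ * cubeSup Q|).bddAbove
    refine Integrable.of_bound (measurable_empRad hd).aestronglyMeasurable C
      (Filter.Eventually.of_forall fun X => ?_)
    rw [empRad_eq hd]
    exact hC ⟨pats X, rfl⟩

/-- In the high-dimensional limit with `m = ⌈αd⌉` i.i.d. Gaussian sample columns,
`R_m(F_sign) = Θ(1/√α)`: there are constants `0 < c ≤ C` with
`R_m(F_sign) ≤ C/√α` for all `d` and `liminf_{d→∞} R_m(F_sign) ≥ c/√α`. -/
theorem popRad_signClass_theta :
    ∃ c C : ℝ, 0 < c ∧ c ≤ C ∧ ∀ α : ℝ, 1 ≤ α →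
      (∀ d : ℕ,
        popRad (signClass d) (Measure.pi fun _ : Fin ⌈α * d⌉₊ => stdGaussian d) ≤
          C / Real.sqrt α) ∧
      c / Real.sqrt α ≤
        Filter.liminf (fun d : ℕ =>
            popRad (signClass d) (Measure.pi fun _ : Fin ⌈α * d⌉₊ => stdGaussian d))
          Filter.atTop := by
  have hc : 0 < kap * truncMoment := mul_pos kap_pos truncMoment_pos
  refine ⟨kap * truncMoment, max (kap * truncMoment) 22, hc, le_max_left _ _, fun α hα => ?_⟩
  have hα0 : 0 < α := by linarith
  have hsα : 0 < Real.sqrt α := Real.sqrt_pos.2 hα0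
  have hup : ∀ d : ℕ,
      popRad (signClass d) (Measure.pi fun _ : Fin ⌈α * d⌉₊ => stdGaussian d) ≤
        max (kap * truncMoment) 22 / Real.sqrt α := by
    intro d
    rcases Nat.eq_zero_or_pos d with rfl | hd
    · -- the sample is empty, and the complexity is an integral of `0`
      have h0 : ∀ X : Fin ⌈α * ((0 : ℕ) : ℝ)⌉₊ → Fin 0 → ℝ, empRad (signClass 0) X = 0 := by
        intro X
        simp [empRad]
      simp only [popRad, h0, integral_zero]
      exact div_nonneg (hc.le.trans (le_max_left _ _)) hsα.le
    · have hdR : (0 : ℝ) < d := by exact_mod_cast hd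
      have hm : 0 < ⌈α * (d : ℝ)⌉₊ := Nat.ceil_pos.2 (by positivity)
      refine (popRad_le hd hm).trans ?_
      have h1 : Real.sqrt ((d : ℝ) / (⌈α * (d : ℝ)⌉₊ : ℝ)) ≤ 1 / Real.sqrt α := by
        rw [← Real.sqrt_one, ← Real.sqrt_div zero_le_one]
        apply Real.sqrt_le_sqrt
        rw [div_le_div_iff₀ (by exact_mod_cast hm) hα0]
        linarith [Nat.le_ceil (α * (d : ℝ))]
      calc 22 * Real.sqrt ((d : ℝ) / (⌈α * (d : ℝ)⌉₊ : ℝ)) ≤ 22 * (1 / Real.sqrt α) := by gcongr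
        _ = 22 / Real.sqrt α := by ring
        _ ≤ _ := by gcongr; exact le_max_right _ _
  refine ⟨hup, ?_⟩
  apply Filter.le_liminf_of_le
  · exact (Filter.isBoundedUnder_of ⟨_, hup⟩).isCoboundedUnder_ge
  · filter_upwards [Filter.eventually_ge_atTop 2] with d hd
    have hdR : (2 : ℝ) ≤ d := by exact_mod_cast hd
    have h2 : 2 ≤ ⌈α * (d : ℝ)⌉₊ := by
      have : (2 : ℝ) ≤ (⌈α * (d : ℝ)⌉₊ : ℝ) := le_trans (by nlinarith) (Nat.le_ceil _)
      exact_mod_cast this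
    have h3 := Nat.ceil_lt_add_one (show 0 ≤ α * (d : ℝ) by positivity)
    obtain ⟨n, hn⟩ : ∃ n, ⌈α * (d : ℝ)⌉₊ = n + 1 := ⟨⌈α * (d : ℝ)⌉₊ - 1, by omega⟩
    rw [hn] at h2 h3 ⊢
    push_cast at h3
    exact popRad_ge hα (by omega) (by omega) (by linarith)
end

section
/- (Gardner capacity of the spherical perceptron equals 2.) Fix α > 0 and for each d set m = ⌈αd⌉. Let x^(1),…,x^(m) be i.i.d. N(0, I_d) and y^(1),…,y^(m) i.i.d. uniform ±1 independent of the points, and let P_d be the probability that there exists w ∈ ℝ^d with sign(wᵀx^(μ)) = y^(μ) for all μ. Then P_d → 1 as d → ∞ if α < 2, and P_d → 0 as d → ∞ if α > 2. -/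
/-!
The proof is Cover's function-counting argument, with the count replaced by two applications of
the Sauer–Shelah lemma. Encode a labelling by the set `s` of indices labelled `+1`, and let
`patterns x` be the family of labellings realized on the points `x`. Since the labels are uniform
and independent of the points, the success probability is `2⁻ᵐ` times the expected size of
`patterns x` (`gardnerProb_eq_lintegral`).

* Upper bound, for every `x`: a set of more than `d` points carries a linear dependence, whose sign
  pattern is not realizable, so `patterns x` shatters only sets of size at most `d` and has at most
  `∑_{i ≤ d} (m choose i)` members (`card_le_of_patterns_shatters`).
* Lower bound, for `x` in general position, which holds almost surely (`ae_generalPosition`): given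
  fewer than `d` points, some hyperplane passes through exactly those, and tilting it realizes all
  patterns on them without changing the labels elsewhere. Hence the complement of `patterns x`
  shatters only sets of size at most `m - d`, and has at most `∑_{i ≤ m - d} (m choose i)` members
  (`card_le_of_compl_patterns_shatters`).

Both bounds are tails of a fair binomial variable with `m ≈ αd` trials: the threshold `d` lies
linearly below the mean `m / 2` when `α > 2`, and `m - d` does when `α < 2`, so by Chebyshev's
inequality (`sum_choose_mul_sq_le`, `tendsto_binTail`) the respective tail tends to `0`.
-/

open MeasureTheory ProbabilityTheory Filter Finset

/-- `gardnerProb α d` is the probability that `m = ⌈αd⌉` i.i.d. Gaussian points in `ℝ^d`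
with i.i.d. uniform `±1` labels are perfectly separated by some homogeneous linear
classifier. -/
noncomputable def gardnerProb (α : ℝ) (d : ℕ) : ENNReal :=
  ((Measure.pi fun _ : Fin ⌈α * d⌉₊ => radMeasure).prod
      (Measure.pi fun _ : Fin ⌈α * d⌉₊ => stdGaussian d))
    {p | ∃ w : Fin d → ℝ, ∀ μ, sgn (∑ i, w i * p.2 μ i) = p.1 μ}

open scoped Topology ENNReal

/-- The pattern `s` (the set of indices labelled `+1`) is realized on the points `x` by some
homogeneous linear classifier, with the convention `sgn 0 = 1`. -/
def Realizable {m d : ℕ} (x : Fin m → Fin d → ℝ) (s : Finset (Fin m)) : Prop :=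
  ∃ w : Fin d → ℝ, ∀ μ, 0 ≤ w ⬝ᵥ x μ ↔ μ ∈ s

open Classical in
/-- The family of all patterns realized on the points `x`. -/
noncomputable def patterns {m d : ℕ} (x : Fin m → Fin d → ℝ) : Finset (Finset (Fin m)) :=
  univ.filter (Realizable x)

lemma mem_patterns {m d : ℕ} {x : Fin m → Fin d → ℝ} {s : Finset (Fin m)} :
    s ∈ patterns x ↔ Realizable x s := by
  simp [patterns]

/-! ### Counting patterns -/

lemma card_le_of_shatters_s12 {m k : ℕ} (A : Finset (Finset (Fin m)))
    (h : ∀ T, A.Shatters T → #T ≤ k) : #A ≤ ∑ i ∈ range (k + 1), m.choose i := by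
  refine (card_le_card_shatterer A).trans (card_shatterer_le_sum_vcDim.trans ?_)
  rw [Fintype.card_fin]
  refine sum_le_sum_of_subset fun i hi => ?_
  have hv : A.vcDim ≤ k := Finset.sup_le fun T hT => h T (mem_shatterer.1 hT)
  simp only [mem_Iic, mem_range] at *
  omega

/-- Radon-type argument: among more than `d` points there is a linear dependence, and the sign
pattern of its coefficients cannot be realized. -/
lemma card_le_of_patterns_shatters {m d : ℕ} (x : Fin m → Fin d → ℝ) (T : Finset (Fin m))
    (hT : (patterns x).Shatters T) : #T ≤ d := by
  by_contra! hd
  have hdep : ¬ LinearIndepOn ℝ x (T : Set (Fin m)) := by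
    intro hli
    have := hli.linearIndependent.fintype_card_le_finrank
    simp at this
    omega
  obtain ⟨c, hc0, i, hiT, hi⟩ := not_linearIndepOn_finset_iff.1 hdep
  obtain ⟨c, hc0, i, hiT, hi⟩ :
      ∃ c : Fin m → ℝ, ∑ i ∈ T, c i • x i = 0 ∧ ∃ i ∈ T, c i < 0 := by
    rcases lt_or_gt_of_ne hi with h | h
    · exact ⟨c, hc0, i, hiT, h⟩
    · refine ⟨-c, ?_, i, hiT, by simpa using h⟩
      simp [hc0]
  obtain ⟨u, hu, hTu⟩ := hT (filter_subset (fun i => 0 ≤ c i) T)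
  obtain ⟨w, hw⟩ := mem_patterns.1 hu
  have hmem : ∀ j ∈ T, (0 ≤ w ⬝ᵥ x j ↔ 0 ≤ c j) := by
    intro j hj
    rw [hw j]
    have := Finset.ext_iff.1 hTu j
    simpa [hj] using this
  have hsum : ∑ j ∈ T, c j * (w ⬝ᵥ x j) = 0 := by
    have := congrArg (fun v => w ⬝ᵥ v) hc0
    simpa [dotProduct_sum, dotProduct_smul] using this
  have hpos : 0 < ∑ j ∈ T, c j * (w ⬝ᵥ x j) := by
    refine sum_pos' (fun j hj => ?_) ⟨i, hiT, ?_⟩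
    · rcases le_or_gt 0 (c j) with h | h
      · exact mul_nonneg h ((hmem j hj).2 h)
      · refine mul_nonneg_of_nonpos_of_nonpos h.le (le_of_not_ge fun h' => ?_)
        exact absurd ((hmem j hj).1 h') (not_le.2 h)
    · refine mul_pos_of_neg_of_neg hi (lt_of_not_ge fun h' => ?_)
      exact absurd ((hmem i hiT).1 h') (not_le.2 hi)
  exact hpos.ne' hsum

/-- Linearly independent vectors admit a dot-product functional with prescribed values. -/
lemma exists_dotProduct_eq {m d : ℕ} {x : Fin m → Fin d → ℝ} {S : Set (Fin m)}
    (h : LinearIndepOn ℝ x S) (c : Fin m → ℝ) : ∃ w : Fin d → ℝ, ∀ i ∈ S, w ⬝ᵥ x i = c i := by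
  obtain ⟨g, hg⟩ := LinearMap.exists_leftInverse_of_injective
    (Finsupp.linearCombination ℝ fun i : S => x i) (LinearMap.ker_eq_bot.2 h)
  let f : Module.Dual ℝ (Fin d → ℝ) := (Finsupp.linearCombination ℝ fun i : S => c i) ∘ₗ g
  refine ⟨(dotProductEquiv ℝ (Fin d)).symm f, fun i hi => ?_⟩
  have h1 : (dotProductEquiv ℝ (Fin d)).symm f ⬝ᵥ x i = f (x i) := by
    conv_rhs => rw [← (dotProductEquiv ℝ (Fin d)).apply_symm_apply f]
    rfl
  have h2 := LinearMap.congr_fun hg (Finsupp.single ⟨i, hi⟩ 1)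
  simp at h2
  rw [h1]
  simp [f, h2]

/-- Points in general position: any `d` or fewer of them are linearly independent. -/
def GeneralPosition {m d : ℕ} (x : Fin m → Fin d → ℝ) : Prop :=
  ∀ U : Finset (Fin m), #U ≤ d → LinearIndepOn ℝ x (U : Set (Fin m))

/-- In general position, if `S = Tᶜ` has fewer than `d` elements, a hyperplane through the points
of `S` and through no other point can be tilted slightly so as to realize every pattern on `S`
while keeping a fixed pattern on `T`. So the non-realized patterns do not shatter `T`. -/
lemma card_le_of_compl_patterns_shatters {m d : ℕ} {x : Fin m → Fin d → ℝ}
    (hx : GeneralPosition x) (T : Finset (Fin m)) (hT : (patterns x)ᶜ.Shatters T) :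
    #T ≤ m - d := by
  by_contra! hd
  have hTm : #T ≤ m := by simpa using card_le_univ T
  have hS : #Tᶜ < d := by
    rw [card_compl, Fintype.card_fin]
    omega
  let p : Submodule ℝ (Fin d → ℝ) :=
    { carrier := {w | ∀ i ∈ Tᶜ, w ⬝ᵥ x i = 0}
      add_mem' := by
        intro a b ha hb i hi
        rw [add_dotProduct, ha i hi, hb i hi, add_zero]
      zero_mem' := by
        intro i _
        exact zero_dotProduct _
      smul_mem' := by
        intro c a ha i hi
        rw [smul_dotProduct, ha i hi, smul_zero] }
  obtain ⟨w₀, hw₀p, hw₀⟩ := Module.Dual.exists_forall_mem_ne_zero_of_forall_exists p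
    (fun j : T => dotProductEquiv ℝ (Fin d) (x j)) (by
      rintro ⟨j, hj⟩
      have hli := hx (insert j Tᶜ) ((card_insert_le _ _).trans hS)
      obtain ⟨w, hw⟩ := exists_dotProduct_eq hli (fun i => if i = j then 1 else 0)
      refine ⟨w, fun i hi => ?_, ?_⟩
      · rw [hw i (by simp [mem_compl.1 hi]), if_neg]
        rintro rfl
        exact mem_compl.1 hi hj
      · have := hw j (by simp)
        change x j ⬝ᵥ w ≠ 0
        rw [dotProduct_comm, this]
        simp)
  replace hw₀ : ∀ j ∈ T, w₀ ⬝ᵥ x j ≠ 0 := fun j hj h => hw₀ ⟨j, hj⟩ (by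
    change x j ⬝ᵥ w₀ = 0
    rwa [dotProduct_comm])
  obtain ⟨u, hu, hTu⟩ := hT (filter_subset (fun j => 0 < w₀ ⬝ᵥ x j) T)
  rw [mem_compl, mem_patterns] at hu
  obtain ⟨w₁, hw₁⟩ := exists_dotProduct_eq (hx Tᶜ hS.le) (fun i => if i ∈ u then 1 else -1)
  have hev : ∀ᶠ t : ℝ in atTop, ∀ i, (0 ≤ (t • w₀ + w₁) ⬝ᵥ x i ↔ i ∈ u) := by
    refine eventually_all.2 fun i => ?_
    simp only [add_dotProduct, smul_dotProduct, smul_eq_mul]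
    by_cases hi : i ∈ T
    · have hiu : i ∈ u ↔ 0 < w₀ ⬝ᵥ x i := by
        have := Finset.ext_iff.1 hTu i
        simpa [hi] using this
      rw [hiu]
      rcases lt_or_gt_of_ne (hw₀ i hi) with h | h
      · have ht : Tendsto (fun t : ℝ => t * (w₀ ⬝ᵥ x i) + w₁ ⬝ᵥ x i) atTop atBot :=
          tendsto_atBot_add_const_right _ _ (tendsto_id.atTop_mul_const_of_neg h)
        filter_upwards [ht.eventually_lt_atBot 0] with t h0
        exact iff_of_false (not_le.2 h0) (not_lt.2 h.le)
      · have ht : Tendsto (fun t : ℝ => t * (w₀ ⬝ᵥ x i) + w₁ ⬝ᵥ x i) atTop atTop :=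
          tendsto_atTop_add_const_right _ _ (tendsto_id.atTop_mul_const h)
        filter_upwards [ht.eventually_ge_atTop 0] with t h0
        exact iff_of_true h0 h
    · have hi' : i ∈ Tᶜ := mem_compl.2 hi
      rw [hw₀p i hi', hw₁ i (by simpa using hi')]
      refine Eventually.of_forall fun t => ?_
      by_cases hiu : i ∈ u <;> simp [hiu]
  obtain ⟨t, ht⟩ := hev.exists
  exact hu ⟨_, ht⟩

/-! ### Gaussian points are almost surely in general position -/

/-- Fubini in a single coordinate. -/
lemma pi_null_of_update_null {ι : Type*} [Fintype ι] [DecidableEq ι] {X : ι → Type*}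
    [∀ i, MeasurableSpace (X i)] (ν : ∀ i, Measure (X i)) [∀ i, SigmaFinite (ν i)]
    {N : Set (∀ i, X i)} (hN : MeasurableSet N) (j : ι)
    (h : ∀ x, ν j {v | Function.update x j v ∈ N} = 0) : Measure.pi ν N = 0 := by
  have key : ∫⁻ x, N.indicator 1 x ∂Measure.pi ν = ∫⁻ _, 0 ∂Measure.pi ν := by
    refine lintegral_eq_of_lmarginal_eq {j} (measurable_one.indicator hN) measurable_const ?_
    rw [lmarginal_singleton, lmarginal_singleton]
    funext x
    rw [lintegral_zero, ← h x]
    exact lintegral_indicator_one (measurable_update x hN)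
  rwa [lintegral_indicator_one hN, lintegral_zero] at key

instance (d : ℕ) : IsProbabilityMeasure (stdGaussian d) := by
  unfold _root_.stdGaussian
  infer_instance

lemma stdGaussian_submodule_null {d : ℕ} (p : Submodule ℝ (Fin d → ℝ)) (hp : p ≠ ⊤) :
    stdGaussian d p = 0 := by
  obtain ⟨f, hf0, hf⟩ := p.exists_dual_map_eq_bot_of_lt_top hp.lt_top inferInstance
  obtain ⟨k, hk⟩ : ∃ k, f (Pi.single k 1) ≠ 0 := by
    by_contra! h
    exact hf0 (LinearMap.pi_ext' fun i => LinearMap.ext_ring (by simpa using h i))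
  have hsub : (p : Set (Fin d → ℝ)) ⊆ {v | f v = 0} := by
    intro v hv
    have : f v ∈ Submodule.map f p := Submodule.mem_map_of_mem hv
    rw [hf] at this
    simpa using this
  refine measure_mono_null hsub ?_
  have hcont : Continuous f := f.continuous_of_finiteDimensional
  refine pi_null_of_update_null _ (isClosed_eq hcont continuous_const).measurableSet k ?_
  intro x
  have := nullSingletonClass_gaussianReal (μ := 0) (v := 1) one_ne_zero
  suffices hs : {v : ℝ | f (Function.update x k v) = 0}.Subsingleton from
    hs.measure_zero (gaussianReal 0 1)
  intro a ha b hb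
  have hab : Function.update x k a - Function.update x k b = (a - b) • Pi.single k (1 : ℝ) := by
    ext i
    by_cases hi : i = k
    · subst hi
      simp
    · simp [hi]
  have h0 : f (Function.update x k a - Function.update x k b) = 0 := by
    have ha' : f (Function.update x k a) = 0 := ha
    have hb' : f (Function.update x k b) = 0 := hb
    rw [map_sub, ha', hb', sub_zero]
  rw [hab, map_smul, smul_eq_mul, mul_eq_zero] at h0
  exact sub_eq_zero.1 (h0.resolve_right hk)

lemma isOpen_linearIndepOn {m d : ℕ} (U : Set (Fin m)) :
    IsOpen {x : Fin m → Fin d → ℝ | LinearIndepOn ℝ x U} := by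
  have hc : Continuous fun (x : Fin m → Fin d → ℝ) (i : U) => x i := by fun_prop
  exact (isOpen_setOfPred_linearIndependent (𝕜 := ℝ) (E := Fin d → ℝ) (ι := U)).preimage hc

lemma ae_linearIndepOn {m d : ℕ} (U : Finset (Fin m)) (hU : #U ≤ d) :
    ∀ᵐ x ∂Measure.pi fun _ : Fin m => stdGaussian d, LinearIndepOn ℝ x (U : Set (Fin m)) := by
  induction U using Finset.induction_on with
  | empty =>
    refine Eventually.of_forall fun x => ?_
    rw [coe_empty]
    exact linearIndepOn_empty ℝ x
  | insert j U hj ih =>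
    rw [card_insert_of_notMem hj] at hU
    have hjU : j ∉ (U : Set (Fin m)) := by simpa using hj
    have hnull : ∀ᵐ x ∂Measure.pi fun _ : Fin m => stdGaussian d,
        ¬ (LinearIndepOn ℝ x (U : Set (Fin m)) ∧
          ¬ LinearIndepOn ℝ x (insert j (U : Set (Fin m)))) := by
      rw [ae_iff]
      simp only [not_not]
      refine pi_null_of_update_null _ ((isOpen_linearIndepOn _).measurableSet.inter
        (isOpen_linearIndepOn _).measurableSet.compl) j fun x => ?_
      have hspan : Submodule.span ℝ (x '' U) ≠ ⊤ := by
        intro htop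
        have h1 := finrank_span_finset_le_card (R := ℝ) (U.image x)
        have h2 : #(U.image x) ≤ #U := card_image_le
        rw [Set.finrank, coe_image, htop, finrank_top, Module.finrank_fin_fun] at h1
        omega
      refine measure_mono_null ?_ (stdGaussian_submodule_null _ hspan)
      rintro v ⟨h1, h2⟩
      have h1' : LinearIndepOn ℝ (Function.update x j v) (U : Set (Fin m)) := h1
      have h2' : ¬ LinearIndepOn ℝ (Function.update x j v) (insert j (U : Set (Fin m))) := h2
      rw [linearIndepOn_insert hjU] at h2'
      have h3 := not_not.1 fun h => h2' ⟨h1', h⟩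
      have himg : Function.update x j v '' (U : Set (Fin m)) = x '' U := by
        refine Set.image_congr fun i hi => ?_
        rw [Function.update_of_ne]
        rintro rfl
        exact hjU hi
      rw [himg, Function.update_self] at h3
      exact h3
    filter_upwards [ih (by omega), hnull] with x h1 h2
    rw [coe_insert]
    exact not_not.1 fun h => h2 ⟨h1, h⟩

lemma ae_generalPosition (m d : ℕ) :
    ∀ᵐ x ∂Measure.pi fun _ : Fin m => stdGaussian d, GeneralPosition x := by
  refine ae_all_iff.2 fun U => ?_
  by_cases hU : #U ≤ d
  · filter_upwards [ae_linearIndepOn U hU] with x hx _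
    exact hx
  · exact Eventually.of_forall fun x h => absurd h hU

/-! ### The success probability as an average count -/

/-- By rescaling `w`, a realized pattern is realized with margin `1` on its negative side; with a
norm bound on `w` this is a closed condition on the points, so the event is a countable union of
closed sets. -/
lemma measurableSet_realizable {m d : ℕ} (s : Finset (Fin m)) :
    MeasurableSet {x : Fin m → Fin d → ℝ | Realizable x s} := by
  have heq : {x : Fin m → Fin d → ℝ | Realizable x s} =
      ⋃ R : ℕ, Prod.snd '' {q : Metric.closedBall (0 : Fin d → ℝ) R × (Fin m → Fin d → ℝ) |
        ∀ μ, (μ ∈ s → 0 ≤ (q.1 : Fin d → ℝ) ⬝ᵥ q.2 μ) ∧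
          (μ ∉ s → (q.1 : Fin d → ℝ) ⬝ᵥ q.2 μ ≤ -1)} := by
    ext x
    simp only [Set.mem_ofPred_eq, Set.mem_iUnion, Set.mem_image, Prod.exists, exists_eq_right]
    constructor
    · rintro ⟨w, hw⟩
      have hev : ∀ᶠ t : ℝ in atTop, 0 ≤ t ∧ ∀ μ, (μ ∉ s → (t • w) ⬝ᵥ x μ ≤ -1) := by
        refine (eventually_ge_atTop 0).and (eventually_all.2 fun μ => ?_)
        by_cases hμ : μ ∈ s
        · exact Eventually.of_forall fun t h => absurd hμ h
        · have hneg : w ⬝ᵥ x μ < 0 := lt_of_not_ge fun h => hμ ((hw μ).1 h)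
          have ht : Tendsto (fun t : ℝ => t * (w ⬝ᵥ x μ)) atTop atBot :=
            tendsto_id.atTop_mul_const_of_neg hneg
          filter_upwards [ht.eventually_le_atBot (-1)] with t h _
          simpa [smul_dotProduct] using h
      obtain ⟨t, ht0, ht⟩ := hev.exists
      obtain ⟨R, hR⟩ := exists_nat_ge ‖t • w‖
      refine ⟨R, ⟨t • w, by simpa using hR⟩, fun μ => ⟨fun hμ => ?_, ht μ⟩⟩
      simpa [smul_dotProduct] using mul_nonneg ht0 ((hw μ).2 hμ)
    · rintro ⟨R, w, hw⟩
      refine ⟨w, fun μ => ⟨fun h => ?_, (hw μ).1⟩⟩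
      by_contra hμ
      linarith [(hw μ).2 hμ]
  rw [heq]
  refine MeasurableSet.iUnion fun R => IsClosed.measurableSet ?_
  have : CompactSpace (Metric.closedBall (0 : Fin d → ℝ) R) :=
    isCompact_iff_compactSpace.1 (isCompact_closedBall _ _)
  refine isClosedMap_snd_of_compactSpace _ ?_
  have hc : ∀ μ, Continuous fun q : Metric.closedBall (0 : Fin d → ℝ) R × (Fin m → Fin d → ℝ) =>
      (q.1 : Fin d → ℝ) ⬝ᵥ q.2 μ := by
    intro μ
    exact (continuous_subtype_val.comp continuous_fst).dotProduct
      ((continuous_apply μ).comp continuous_snd)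
  simp only [Set.ofPred_forall, Set.ofPred_and]
  refine isClosed_iInter fun μ => IsClosed.inter ?_ ?_
  · exact isClosed_iInter fun _ => isClosed_le continuous_const (hc μ)
  · exact isClosed_iInter fun _ => isClosed_le (hc μ) continuous_const

lemma radMeasure_singleton (b : Prop) [Decidable b] :
    radMeasure {if b then (1 : ℝ) else -1} = 2⁻¹ := by
  unfold radMeasure
  rw [PMF.toMeasure_apply_singleton _ _ (measurableSet_singleton _), PMF.map_apply,
    tsum_bool]
  by_cases hb : b <;> simp [hb, PMF.bernoulli_apply] <;> norm_num

/-- The label vector of a pattern: `+1` on `s`, `-1` off `s`. -/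
def labels {m : ℕ} (s : Finset (Fin m)) (μ : Fin m) : ℝ := if μ ∈ s then 1 else -1

lemma sgn_eq_labels_iff {m : ℕ} (s : Finset (Fin m)) (μ : Fin m) (t : ℝ) :
    sgn t = labels s μ ↔ (0 ≤ t ↔ μ ∈ s) := by
  unfold sgn labels
  by_cases h : 0 ≤ t <;> by_cases h' : μ ∈ s <;> simp [h, h'] <;> norm_num

lemma labels_injective {m : ℕ} : Function.Injective (labels (m := m)) := by
  intro s t h
  ext μ
  have := congrFun h μ
  unfold labels at this
  by_cases h1 : μ ∈ s <;> by_cases h2 : μ ∈ t <;> simp [h1, h2] at this ⊢ <;> norm_num at this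

lemma gardnerProb_eq_sum (α : ℝ) (d : ℕ) :
    gardnerProb α d = ∑ s : Finset (Fin ⌈α * d⌉₊), (2⁻¹ : ℝ≥0∞) ^ ⌈α * d⌉₊ *
      (Measure.pi fun _ : Fin ⌈α * d⌉₊ => stdGaussian d) {x | Realizable x s} := by
  unfold gardnerProb
  generalize ⌈α * d⌉₊ = m
  have heq : {p : (Fin m → ℝ) × (Fin m → Fin d → ℝ) |
        ∃ w : Fin d → ℝ, ∀ μ, sgn (∑ i, w i * p.2 μ i) = p.1 μ} =
      ⋃ s ∈ (univ : Finset (Finset (Fin m))), {labels s} ×ˢ {x | Realizable x s} := by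
    ext ⟨y, x⟩
    simp only [Set.mem_ofPred_eq, mem_univ, Set.iUnion_true, Set.mem_iUnion, Set.mem_prod,
      Set.mem_singleton_iff]
    constructor
    · rintro ⟨w, hw⟩
      have hy : y = labels (univ.filter fun μ => 0 ≤ w ⬝ᵥ x μ) := by
        funext μ
        rw [← hw μ, sgn_eq_labels_iff]
        simp only [mem_filter, mem_univ, true_and]
        rfl
      exact ⟨_, hy, w, fun μ => by simp⟩
    · rintro ⟨s, rfl, w, hw⟩
      exact ⟨w, fun μ => (sgn_eq_labels_iff s μ _).2 (hw μ)⟩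
  rw [heq, measure_biUnion_finset]
  · refine sum_congr rfl fun s _ => ?_
    rw [Measure.prod_prod, Measure.pi_singleton]
    congr 1
    calc ∏ i, radMeasure {labels s i} = ∏ _i : Fin m, (2⁻¹ : ℝ≥0∞) :=
          prod_congr rfl fun i _ => radMeasure_singleton _
      _ = 2⁻¹ ^ m := by simp
  · intro s _ t _ hst
    refine Set.disjoint_left.2 ?_
    rintro ⟨y, x⟩ ⟨h1, _⟩ ⟨h2, _⟩
    exact hst (labels_injective (h1.symm.trans h2))
  · exact fun s _ => (measurableSet_singleton _).prod (measurableSet_realizable s)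

lemma gardnerProb_eq_lintegral (α : ℝ) (d : ℕ) :
    gardnerProb α d = (2⁻¹ : ℝ≥0∞) ^ ⌈α * d⌉₊ *
      ∫⁻ x, (#(patterns x) : ℝ≥0∞) ∂(Measure.pi fun _ : Fin ⌈α * d⌉₊ => stdGaussian d) := by
  classical
  rw [gardnerProb_eq_sum, ← mul_sum]
  congr 1
  have hcard : ∀ x : Fin ⌈α * d⌉₊ → Fin d → ℝ, (#(patterns x) : ℝ≥0∞) =
      ∑ s : Finset (Fin ⌈α * d⌉₊), {x | Realizable x s}.indicator 1 x := by
    intro x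
    simp [patterns, Set.indicator_apply]
  simp_rw [hcard]
  rw [lintegral_finsetSum _ fun s _ => measurable_one.indicator (measurableSet_realizable s)]
  exact sum_congr rfl fun s _ => (lintegral_indicator_one (measurableSet_realizable s)).symm

lemma gardnerProb_le_one (α : ℝ) (d : ℕ) : gardnerProb α d ≤ 1 := prob_le_one

/-! ### Binomial tails -/

/-- The probability that a fair binomial variable with `m` trials is at most `k`. -/
noncomputable def binTail (m k : ℕ) : ℝ≥0∞ :=
  2⁻¹ ^ m * ((∑ i ∈ range (k + 1), m.choose i : ℕ) : ℝ≥0∞)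

lemma gardnerProb_le_binTail (α : ℝ) (d : ℕ) : gardnerProb α d ≤ binTail ⌈α * d⌉₊ d := by
  rw [gardnerProb_eq_lintegral]
  unfold binTail
  gcongr
  refine (lintegral_mono fun x => Nat.cast_le.2
    (card_le_of_shatters_s12 _ (card_le_of_patterns_shatters x))).trans ?_
  simp

lemma one_le_gardnerProb_add_binTail (α : ℝ) (d : ℕ) :
    1 ≤ gardnerProb α d + binTail ⌈α * d⌉₊ (⌈α * d⌉₊ - d) := by
  rw [gardnerProb_eq_lintegral]
  unfold binTail
  generalize ⌈α * d⌉₊ = m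
  rw [← mul_add]
  have hpow : (1 : ℝ≥0∞) = 2⁻¹ ^ m * 2 ^ m := by
    rw [← mul_pow, ENNReal.inv_mul_cancel (by norm_num) (by norm_num), one_pow]
  rw [hpow]
  gcongr
  set K : ℕ := ∑ i ∈ range (m - d + 1), m.choose i
  calc (2 : ℝ≥0∞) ^ m = ∫⁻ _, 2 ^ m ∂(Measure.pi fun _ : Fin m => stdGaussian d) := by simp
    _ ≤ ∫⁻ x, ((#(patterns x) : ℝ≥0∞) + K) ∂(Measure.pi fun _ : Fin m => stdGaussian d) := by
        refine lintegral_mono_ae ?_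
        filter_upwards [ae_generalPosition m d] with x hx
        have h1 := card_le_of_shatters_s12 _ (card_le_of_compl_patterns_shatters hx)
        have h2 : #(patterns x) + #(patterns x)ᶜ = 2 ^ m := by
          rw [card_add_card_compl]
          simp
        have h3 : 2 ^ m ≤ #(patterns x) + K := by omega
        exact_mod_cast h3
    _ = _ := by
        rw [lintegral_add_right _ measurable_const]
        simp

/-- Chebyshev's inequality for the fair binomial distribution, in counting form. -/
lemma sum_choose_mul_sq_le (m k : ℕ) (hk : 2 * k ≤ m) :
    (∑ i ∈ range (k + 1), (m.choose i : ℝ)) * ((m : ℝ) - 2 * k) ^ 2 ≤ m * 2 ^ m := by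
  have hvar := congrArg (Polynomial.eval (1 / 2 : ℝ)) (bernsteinPolynomial.variance ℝ m)
  simp only [Polynomial.eval_finsetSum, bernsteinPolynomial, Polynomial.eval_mul,
    Polynomial.eval_pow, Polynomial.eval_sub, Polynomial.eval_X,
    Polynomial.eval_natCast, Polynomial.eval_one, nsmul_eq_mul] at hvar
  have hterm : ∀ i ∈ range (m + 1), (m.choose i : ℝ) * ((m : ℝ) - 2 * i) ^ 2 =
      4 * 2 ^ m * (((m : ℝ) * (1 / 2) - i) ^ 2 *
        (m.choose i * (1 / 2) ^ i * (1 - 1 / 2) ^ (m - i))) := by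
    intro i hi
    have him : i ≤ m := by
      rw [mem_range] at hi
      omega
    have hp : (1 / 2 : ℝ) ^ i * (1 - 1 / 2) ^ (m - i) * 2 ^ m = 1 := by
      rw [show (1 - 1 / 2 : ℝ) = 1 / 2 by norm_num, ← pow_add, Nat.add_sub_cancel' him,
        ← mul_pow]
      norm_num
    linear_combination (-(m.choose i : ℝ) * ((m : ℝ) - 2 * i) ^ 2) * hp
  calc (∑ i ∈ range (k + 1), (m.choose i : ℝ)) * ((m : ℝ) - 2 * k) ^ 2
      = ∑ i ∈ range (k + 1), (m.choose i : ℝ) * ((m : ℝ) - 2 * k) ^ 2 := sum_mul _ _ _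
    _ ≤ ∑ i ∈ range (k + 1), (m.choose i : ℝ) * ((m : ℝ) - 2 * i) ^ 2 := by
        refine sum_le_sum fun i hi => ?_
        have hik : (i : ℝ) ≤ k := by
          rw [mem_range] at hi
          exact_mod_cast Nat.le_of_lt_succ hi
        have hkm : (2 : ℝ) * k ≤ m := by exact_mod_cast hk
        have : (0 : ℝ) ≤ m - 2 * k := by linarith
        gcongr
    _ ≤ ∑ i ∈ range (m + 1), (m.choose i : ℝ) * ((m : ℝ) - 2 * i) ^ 2 := by
        refine sum_le_sum_of_subset_of_nonneg ?_ fun i _ _ => by positivity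
        intro i hi
        rw [mem_range] at *
        omega
    _ = 4 * 2 ^ m * (m * (1 / 2) * (1 - 1 / 2)) := by
        rw [sum_congr rfl hterm, ← mul_sum, ← hvar]
    _ = m * 2 ^ m := by ring

lemma binTail_le (m k : ℕ) (hk : 2 * k < m) :
    binTail m k ≤ ENNReal.ofReal (m / ((m : ℝ) - 2 * k) ^ 2) := by
  have hkm : (0 : ℝ) < m - 2 * k := by
    have : (2 : ℝ) * k < m := by exact_mod_cast hk
    linarith
  have hb : binTail m k = ENNReal.ofReal ((∑ i ∈ range (k + 1), (m.choose i : ℝ)) / 2 ^ m) := by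
    rw [ENNReal.ofReal_div_of_pos (by positivity), ENNReal.ofReal_pow (by norm_num)]
    unfold binTail
    rw [← Nat.cast_sum, ENNReal.ofReal_natCast, div_eq_mul_inv, mul_comm, ENNReal.inv_pow]
    simp
  rw [hb]
  refine ENNReal.ofReal_le_ofReal ?_
  rw [div_le_div_iff₀ (by positivity) (by positivity)]
  exact sum_choose_mul_sq_le m k hk.le

/-- The tail vanishes as soon as `m = O(d)` and `m - 2k` grows linearly in `d`. -/
lemma tendsto_binTail {a c : ℝ} (hc : 0 < c) (m k : ℕ → ℕ)
    (hm : ∀ d, (m d : ℝ) ≤ a * d + 1) (hk : ∀ d, c * d - 1 ≤ (m d : ℝ) - 2 * k d) :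
    Tendsto (fun d => binTail (m d) (k d)) atTop (𝓝 0) := by
  have hlim : Tendsto (fun d : ℕ => (a * d + 1) / (c * d - 1) ^ 2) atTop (𝓝 0) := by
    have h1 : Tendsto (fun d : ℕ => ((d : ℝ))⁻¹) atTop (𝓝 0) := tendsto_inv_atTop_nhds_zero_nat
    have h2 : Tendsto (fun d : ℕ => (d : ℝ)⁻¹ * ((a + (d : ℝ)⁻¹) / (c - (d : ℝ)⁻¹) ^ 2)) atTop
        (𝓝 (0 * ((a + 0) / (c - 0) ^ 2))) :=
      h1.mul ((h1.const_add a).div ((h1.const_sub c).pow 2) (by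
        rw [sub_zero]
        positivity))
    rw [zero_mul] at h2
    refine h2.congr' ?_
    filter_upwards [eventually_gt_atTop 0] with d hd
    have hd' : (d : ℝ) ≠ 0 := by positivity
    have : (c * d - 1) = d * (c - (d : ℝ)⁻¹) := by
      field_simp
    rw [this]
    by_cases h0 : c - (d : ℝ)⁻¹ = 0
    · simp [h0]
    · field_simp
  have hlim' := ENNReal.tendsto_ofReal hlim
  rw [ENNReal.ofReal_zero] at hlim'
  refine tendsto_of_tendsto_of_tendsto_of_le_of_le' tendsto_const_nhds hlim'
    (Eventually.of_forall fun _ => zero_le) ?_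
  have hpos : ∀ᶠ d : ℕ in atTop, 0 < c * (d : ℝ) - 1 := by
    have ht : Tendsto (fun d : ℕ => c * (d : ℝ)) atTop atTop :=
      tendsto_natCast_atTop_atTop.const_mul_atTop hc
    filter_upwards [ht.eventually_gt_atTop 1] with d hd
    linarith
  filter_upwards [hpos] with d hd
  have hmk : 2 * k d < m d := by
    have : (2 : ℝ) * k d < m d := by linarith [hk d]
    exact_mod_cast this
  refine (binTail_le _ _ hmk).trans (ENNReal.ofReal_le_ofReal ?_)
  have h0 : (0 : ℝ) ≤ m d := Nat.cast_nonneg _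
  exact div_le_div₀ (h0.trans (hm d)) (hm d) (by positivity)
    (pow_le_pow_left₀ hd.le (hk d) 2)

/-- The Gardner capacity of the spherical perceptron equals `2`: for `m = ⌈αd⌉` the
probability of perfect separation of random labels tends to `1` if `α < 2` and to `0`
if `α > 2`, as `d → ∞`. -/
theorem gardner_capacity (α : ℝ) (hα : 0 < α) :
    (α < 2 → Tendsto (fun d : ℕ => gardnerProb α d) atTop (nhds 1)) ∧
    (2 < α → Tendsto (fun d : ℕ => gardnerProb α d) atTop (nhds 0)) := by
  have hm : ∀ d : ℕ, (⌈α * d⌉₊ : ℝ) ≤ α * d + 1 := fun d =>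
    (Nat.ceil_lt_add_one (by positivity)).le
  have hm' : ∀ d : ℕ, α * d ≤ (⌈α * d⌉₊ : ℝ) := fun d => Nat.le_ceil _
  constructor
  · intro h2
    -- With `m = ⌈αd⌉` and `k = m - d` (truncated), `m - 2k` is `2d - m` or `m`.
    have hc : 0 < min α (2 - α) := lt_min hα (by linarith)
    have ht := tendsto_binTail hc (fun d => ⌈α * d⌉₊) (fun d => ⌈α * d⌉₊ - d) hm (by
      intro d
      have hd : (0 : ℝ) ≤ d := Nat.cast_nonneg d
      rcases le_total d ⌈α * d⌉₊ with h | h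
      · rw [Nat.cast_sub h]
        have := mul_le_mul_of_nonneg_right (min_le_right α (2 - α)) hd
        linarith [hm d]
      · rw [Nat.sub_eq_zero_of_le h]
        have := mul_le_mul_of_nonneg_right (min_le_left α (2 - α)) hd
        push_cast
        linarith [hm' d])
    have hl := ENNReal.Tendsto.sub (tendsto_const_nhds (x := (1 : ℝ≥0∞))) ht (by simp)
    rw [tsub_zero] at hl
    exact tendsto_of_tendsto_of_tendsto_of_le_of_le hl tendsto_const_nhds
      (fun d => tsub_le_iff_right.2 (one_le_gardnerProb_add_binTail α d))
      (fun d => gardnerProb_le_one α d)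
  · intro h2
    have ht := tendsto_binTail (sub_pos.2 h2) (fun d => ⌈α * d⌉₊) (fun d => d) hm (by
      intro d
      linarith [hm' d])
    exact tendsto_of_tendsto_of_tendsto_of_le_of_le tendsto_const_nhds ht
      (fun d => zero_le) (fun d => gardnerProb_le_binTail α d)
end
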